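/- arXiv:1508.05511 — 5 statements merged into one kernel-verified Lean document; each statement's English description precedes it below -/
import Mathlib

section
/- Let u : A → A' be a flat local homomorphism of Noetherian local domains of Krull dimension one, with maximal ideals m ⊆ A and m' ⊆ A', such that mA' = m'. Assume ℚ ⊆ A, and that there exist ring homomorphisms k → A and k' → A' splitting the quotient maps A → k := A/m and A' → k' := A'/mA' respectively, with u(k) ⊆ k'. Then every A-algebra homomorphism v : B → A' from a finite type A-algebra B factors through a standard smooth A-algebra B', i.e. there exist a standard smooth A-algebra B' and A-algebra homomorphisms B → B' and B' → A' whose composite is v. -/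
universe u

open MvPolynomial in
/-- `B` is standard smooth over `A`: there is a presentation `B ≅ A[Y₁,…,Yₙ]/I` and a
system of polynomials `f = (f₁,…,f_r)` in `I`, `r ≤ n`, such that
`1 ∈ ((f):I)·Δ_f·B`, where `Δ_f` is the ideal generated by the `r × r` minors of the
Jacobian matrix `(∂fᵢ/∂Yⱼ)`. -/
def IsStandardSmoothP (A B : Type u) [CommRing A] [CommRing B] [Algebra A B] : Prop :=
  ∃ (n r : ℕ), r ≤ n ∧
    ∃ (I : Ideal (MvPolynomial (Fin n) A))
      (_e : ((MvPolynomial (Fin n) A) ⧸ I) ≃ₐ[A] B)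
      (f : Fin r → MvPolynomial (Fin n) A),
      (∀ i, f i ∈ I) ∧
      (1 : (MvPolynomial (Fin n) A) ⧸ I) ∈
        Ideal.map (Ideal.Quotient.mk I)
          ((Ideal.span (Set.range f)).colon I *
            Ideal.span {d : MvPolynomial (Fin n) A |
              ∃ c : Fin r ↪ Fin n,
                d = (Matrix.of fun i j : Fin r => pderiv (c j) (f i)).det})

/-!
Write `y` for the images in `A'` of generators of `B`. The algebra `A[y]` is a domain containing
`A`, so in characteristic zero it is generically smooth over `A`: by the Jacobian criterion the
relations among the `yᵢ` are, up to a multiplier `N`, generated by polynomials `f₁, …, f_r` with a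
minor `Δ` of their Jacobian matrix such that `(NΔ)(y) ≠ 0`. As `A'` is one-dimensional, `(NΔ)(y)`
divides some nonzero `d ∈ A`.

Modulo `d²`, the elements of `A'` are `A`-combinations of representatives of residues. Finitely many
of these lie in `A ⊗ₖ E` for a smooth `k`-subalgebra `E` of `k'`, and by flatness divisibility by
`d²` in `A'` already holds in `A ⊗ₖ E`. After adjoining variables which account for the multiples of
`d²`, the point `y` lifts to a standard smooth algebra `D`, as a zero of `f` modulo `d²`.

Newton's method turns this approximate solution into an exact one: by Taylor's formula the equations
`f (y + d • BX) = 0`, with `B` built from an adjugate matrix, are `d²` times a system in `X` which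
is standard smooth over `D` near `X = 0`.
-/

open MvPolynomial
open scoped TensorProduct

/-- The Jacobian matrix `(∂fᵢ/∂Xⱼ)` of a family of polynomials, one row for each polynomial. -/
noncomputable def jacobianMatrix {ι σ R : Type*} [CommSemiring R] (f : ι → MvPolynomial σ R) :
    Matrix ι σ (MvPolynomial σ R) :=
  Matrix.of fun i j => pderiv j (f i)

lemma exists_aeval_add_mul_eq {σ R S : Type*} [Fintype σ] [CommRing R] [CommRing S]
    [Algebra R S] (F : MvPolynomial σ R) (y V : σ → S) (d : S) :
    ∃ Q ∈ Ideal.span (Set.range V) ^ 2,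
      aeval (fun i => y i + d * V i) F =
        aeval y F + d * ∑ i, aeval y (pderiv i F) * V i + d ^ 2 * Q := by
  classical
  have hV (i : σ) : V i ∈ Ideal.span (Set.range V) := Ideal.subset_span ⟨i, rfl⟩
  induction F using MvPolynomial.induction_on with
  | C a => exact ⟨0, zero_mem _, by simp⟩
  | add p q hp hq =>
    obtain ⟨P, hP, hp⟩ := hp
    obtain ⟨Q, hQ, hq⟩ := hq
    refine ⟨P + Q, add_mem hP hQ, ?_⟩
    simp only [map_add, hp, hq, add_mul, Finset.sum_add_distrib]
    ring
  | mul_X p j hp =>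
    obtain ⟨P, hP, hp⟩ := hp
    have hgrad : ∑ i, aeval y (pderiv i (p * X j)) * V i =
        (∑ i, aeval y (pderiv i p) * V i) * y j + aeval y p * V j := by
      simp [Derivation.leibniz, pderiv_X, Pi.single_apply, apply_ite, add_mul,
        Finset.sum_add_distrib, Finset.sum_mul, mul_right_comm, mul_comm (y j), add_comm]
    refine ⟨P * y j + (∑ i, aeval y (pderiv i p) * V i) * V j + d * V j * P,
      add_mem (add_mem (Ideal.mul_mem_right _ _ hP) ?_) (Ideal.mul_mem_left _ _ hP), ?_⟩
    · rw [sq]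
      exact Ideal.mul_mem_mul (sum_mem fun i _ => Ideal.mul_mem_left _ _ (hV i)) (hV j)
    · rw [hgrad, map_mul, map_mul, hp, aeval_X, aeval_X]
      ring

section Minors

variable {m n : Type*} [Fintype m] [DecidableEq m]

lemma exists_det_submatrix_ne_zero_of_linearIndependent_row {K : Type*} [Field K] [Finite n]
    {M : Matrix m n K} (hM : LinearIndependent K M.row) :
    ∃ c : m → n, (M.submatrix id c).det ≠ 0 := by
  have := Fintype.ofFinite n
  have hspan : Submodule.span K (Set.range M.col) = ⊤ := by
    apply Submodule.eq_top_of_finrank_eq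
    rw [← M.rank_eq_finrank_span_cols, hM.rank_matrix, Module.finrank_fintype_fun_eq_card]
  obtain ⟨ι, c, -, hc, hli⟩ := exists_linearIndependent' K M.col
  let b := Module.Basis.mk hli (hc.trans hspan).ge
  let e : m ≃ ι := (Pi.basisFun K m).indexEquiv b
  have hcols : LinearIndependent K (M.submatrix id (c ∘ e)).col := hli.comp e e.injective
  exact ⟨c ∘ e, ((Matrix.isUnit_iff_isUnit_det _).mp
    (Matrix.linearIndependent_cols_iff_isUnit.mp hcols)).ne_zero⟩

lemma exists_mul_eq_det_submatrix_smul_one {R : Type*} [CommRing R] [Fintype n]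
    (M : Matrix m n R) (c : m → n) :
    ∃ B : Matrix n m R, M * B = (M.submatrix id c).det • (1 : Matrix m m R) := by
  classical
  refine ⟨(1 : Matrix n n R).submatrix id c * (M.submatrix id c).adjugate, ?_⟩
  have hcols : M * (1 : Matrix n n R).submatrix id c = M.submatrix id c := by
    simpa using Matrix.submatrix_mul_equiv M 1 id (Equiv.refl n) c
  rw [← Matrix.mul_assoc, hcols, Matrix.mul_adjugate]

end Minors

lemma aeval_mem_sq_of_forall_aeval_pderiv_mem {σ A L : Type*} [Finite σ] [CommRing A]
    [CommRing L] [Algebra A L] {I : Ideal L} [Algebra.FormallySmooth A (L ⧸ I)]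
    {f : MvPolynomial σ A} {x : σ → L} (hf : aeval x f ∈ I)
    (hd : ∀ i, aeval x (pderiv i f) ∈ I) : aeval x f ∈ I ^ 2 := by
  have := Fintype.ofFinite σ
  have hI : I ^ 2 ≤ I := Ideal.pow_le_self two_ne_zero
  let φ : L →ₐ[A] (L ⧸ I ^ 2) := Ideal.Quotient.mkₐ A (I ^ 2)
  let π : (L ⧸ I ^ 2) →ₐ[A] (L ⧸ I) := Ideal.Quotient.factorₐ A hI
  have hker : RingHom.ker (π : (L ⧸ I ^ 2) →+* L ⧸ I) ^ 2 = ⊥ := by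
    have : RingHom.ker (π : (L ⧸ I ^ 2) →+* L ⧸ I) = I.map (Ideal.Quotient.mk (I ^ 2)) :=
      Ideal.Quotient.factor_ker hI
    rw [this, ← Ideal.map_pow, Ideal.map_quotient_self]
  let g := Algebra.FormallySmooth.liftOfSurjective
    (AlgHom.id A (L ⧸ I)) π (Ideal.Quotient.factor_surjective hI) ⟨2, hker⟩
  have hg (z : L ⧸ I) : π (g z) = z :=
    Algebra.FormallySmooth.liftOfSurjective_apply _ _ _ _ z
  -- `y` differs from the class of `x` by elements of square zero, and satisfies over `A` every
  -- polynomial relation which `x` satisfies modulo `I`.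
  let y : σ → L ⧸ I ^ 2 := fun i => g (π (φ (x i)))
  have hy {F : MvPolynomial σ A} (hF : aeval x F ∈ I) : aeval y F = 0 := by
    have haeval : aeval y = (g.comp (Ideal.Quotient.mkₐ A I)).comp (aeval x) := by
      ext i
      simp [y, π, φ]
    rw [haeval, AlgHom.comp_apply, AlgHom.comp_apply, Ideal.Quotient.mkₐ_eq_mk,
      Ideal.Quotient.eq_zero_iff_mem.mpr hF, map_zero]
  obtain ⟨Q, hQ, hTaylor⟩ := exists_aeval_add_mul_eq f y (fun i => φ (x i) - y i) 1
  have hQ0 : Q = 0 := by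
    rw [← Ideal.mem_bot, ← hker]
    refine Ideal.pow_right_mono (Ideal.span_le.mpr ?_) 2 hQ
    rintro _ ⟨i, rfl⟩
    simp [RingHom.mem_ker, y, hg]
  have hφ : aeval (fun i => φ (x i)) f = φ (aeval x f) := (comp_aeval_apply x φ f).symm
  refine Ideal.Quotient.eq_zero_iff_mem.mp (?_ : φ (aeval x f) = 0)
  simpa [hφ, hy hf, hy (hd _), hQ0] using hTaylor

section JacobianCriterion

lemma exists_smul_eq_sum_smul_of_mem_span_residueField {R M ι : Type*} [CommRing R] [Fintype ι]
    {p : Ideal R} [p.IsPrime] [AddCommGroup M] [Module R M] [Module p.ResidueField M]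
    [IsScalarTower R p.ResidueField M] {w : ι → M} {v : M}
    (hv : v ∈ Submodule.span p.ResidueField (Set.range w)) :
    ∃ s ∉ p, ∃ b : ι → R, s • v = ∑ i, b i • w i := by
  obtain ⟨a, rfl⟩ := (Submodule.mem_span_range_iff_exists_fun _).mp hv
  obtain ⟨s, hs⟩ := IsLocalization.exist_integer_multiples_of_finite (nonZeroDivisors (R ⧸ p)) a
  obtain ⟨t, ht⟩ := Ideal.Quotient.mk_surjective s.1
  choose b' hb' using hs
  choose b hb using fun i => Ideal.Quotient.mk_surjective (b' i)
  have hba (i : ι) : algebraMap R p.ResidueField (b i) = algebraMap R p.ResidueField t * a i := by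
    have := hb' i
    rwa [← hb, ← ht, Algebra.smul_def] at this
  refine ⟨t, fun h => nonZeroDivisors.coe_ne_zero s ?_, b, ?_⟩
  · rw [← ht, Ideal.Quotient.eq_zero_iff_mem.mpr h]
  · simp only [Finset.smul_sum, ← algebraMap_smul p.ResidueField t, ← mul_smul, ← hba,
      algebraMap_smul]

lemma exists_notMem_forall_mul_mem_of_map_le {R : Type*} [CommRing R] {p J : Ideal R} [p.IsPrime]
    (hp : p.FG) (h : p.map (algebraMap R (Localization.AtPrime p)) ≤
      J.map (algebraMap R (Localization.AtPrime p))) :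
    ∃ N ∉ p, ∀ g ∈ p, N * g ∈ J := by
  have hloc (g : R) (hg : g ∈ p) : ∃ N ∉ p, N * g ∈ J := by
    obtain ⟨N, hN, hNg⟩ := (IsLocalization.algebraMap_mem_map_algebraMap_iff p.primeCompl
      (Localization.AtPrime p) _ _).mp (h (Ideal.mem_map_of_mem _ hg))
    exact ⟨N, hN, hNg⟩
  choose! N hN hNg using hloc
  obtain ⟨t, ht⟩ := hp
  have htp (g : R) (hg : g ∈ t) : g ∈ p := ht ▸ Ideal.subset_span hg
  have hle : p ≤ J.colon {∏ g ∈ t, N g} := by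
    refine ht.ge.trans (Ideal.span_le.mpr fun g hg => ?_)
    obtain ⟨z, hz⟩ := Finset.dvd_prod_of_mem N hg
    rw [SetLike.mem_coe, Submodule.mem_colon_singleton, smul_eq_mul, mul_comm, hz, mul_right_comm]
    exact Ideal.mul_mem_right _ _ (hNg g (htp g hg))
  refine ⟨∏ g ∈ t, N g, ?_, fun g hg => ?_⟩
  · simpa [Ideal.IsPrime.prod_mem_iff] using fun g hg => hN g (htp g hg)
  · simpa [Submodule.mem_colon_singleton, mul_comm] using hle hg

variable {σ A : Type*} [CommRing A]

/-- The gradient of the elements of a prime ideal `p` of a polynomial ring, with values in the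
residue field of `p`. By the Leibniz rule it is linear over the polynomial ring on `p`. -/
noncomputable def residueGradient (p : Ideal (MvPolynomial σ A)) [p.IsPrime] :
    p →ₗ[MvPolynomial σ A] (σ → p.ResidueField) where
  toFun f i := algebraMap _ _ (pderiv i f.1)
  map_add' f g := by ext i; simp
  map_smul' a f := by
    ext i
    have : algebraMap _ p.ResidueField f.1 = 0 := Ideal.algebraMap_residueField_eq_zero.mpr f.2
    simp [Derivation.leibniz, this, Algebra.smul_def]

variable {p : Ideal (MvPolynomial σ A)} [p.IsPrime]

variable [Finite σ] [Algebra.FormallySmooth A p.ResidueField]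

lemma algebraMap_mem_sq_of_residueGradient_eq_zero {f : p} (hf : residueGradient p f = 0) :
    algebraMap _ (Localization.AtPrime p) f.1 ∈
      IsLocalRing.maximalIdeal (Localization.AtPrime p) ^ 2 := by
  have hmem (F : MvPolynomial σ A) (hF : F ∈ p) : algebraMap _ (Localization.AtPrime p) F ∈
      IsLocalRing.maximalIdeal (Localization.AtPrime p) :=
    (IsLocalization.AtPrime.to_map_mem_maximal_iff _ p F _).mpr hF
  have hsmooth : Algebra.FormallySmooth A
      (Localization.AtPrime p ⧸ IsLocalRing.maximalIdeal (Localization.AtPrime p)) :=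
    ‹Algebra.FormallySmooth A p.ResidueField›
  have haeval (F : MvPolynomial σ A) :
      aeval (fun i => algebraMap _ (Localization.AtPrime p) (X i)) F = algebraMap _ _ F :=
    (AlgHom.congr_fun (aeval_unique (IsScalarTower.toAlgHom A (MvPolynomial σ A) _)) F).symm
  rw [← haeval]
  refine aeval_mem_sq_of_forall_aeval_pderiv_mem ?_ fun i => ?_
  · exact haeval f.1 ▸ hmem _ f.2
  · exact haeval (pderiv i f.1) ▸
      hmem _ (Ideal.algebraMap_residueField_eq_zero.mp (congrFun hf i))

lemma map_le_map_span_sup_sq_of_residueGradient_mem_span {ι : Type*} [Finite ι] {f : ι → p}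
    (hf : ∀ g, residueGradient p g ∈
      Submodule.span p.ResidueField (Set.range (residueGradient p ∘ f))) :
    p.map (algebraMap _ (Localization.AtPrime p)) ≤
      (Ideal.span (Set.range fun i => (f i).1)).map (algebraMap _ (Localization.AtPrime p)) ⊔
        IsLocalRing.maximalIdeal (Localization.AtPrime p) ^ 2 := by
  have := Fintype.ofFinite ι
  refine Ideal.map_le_iff_le_comap.mpr fun g hg => ?_
  obtain ⟨s, hs, b, hb⟩ := exists_smul_eq_sum_smul_of_mem_span_residueField (hf ⟨g, hg⟩)
  let h : p := s • ⟨g, hg⟩ - ∑ i, b i • f i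
  have hh : residueGradient p h = 0 := by
    rw [map_sub, map_smul, hb]
    simp
  have hsg : s * g = ∑ i, b i * (f i).1 + h.1 := by simp [h]
  have hsu : IsUnit (algebraMap _ (Localization.AtPrime p) s) :=
    IsLocalization.map_units _ (⟨s, hs⟩ : p.primeCompl)
  rw [Ideal.mem_comap, ← Ideal.unit_mul_mem_iff_mem _ hsu, ← map_mul, hsg, map_add]
  exact Submodule.add_mem_sup
    (Ideal.mem_map_of_mem _
      (sum_mem fun i _ => Ideal.mul_mem_left _ _ (Ideal.subset_span ⟨i, rfl⟩)))
    (algebraMap_mem_sq_of_residueGradient_eq_zero hh)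

lemma exists_det_jacobianMatrix_submatrix_notMem (hp : p.FG) :
    ∃ (r : ℕ) (f : Fin r → MvPolynomial σ A) (c : Fin r → σ) (N : MvPolynomial σ A),
      (∀ i, f i ∈ p) ∧ N ∉ p ∧ (∀ g ∈ p, N * g ∈ Ideal.span (Set.range f)) ∧
        ((jacobianMatrix f).submatrix id c).det ∉ p := by
  obtain ⟨ι, a, -, hspan, hli⟩ := exists_linearIndependent' p.ResidueField (residueGradient p)
  have : Finite ι := hli.finite
  obtain ⟨r, ⟨e⟩⟩ := Finite.exists_equiv_fin ι
  let f : Fin r → p := a ∘ e.symm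
  have hf (g : p) : residueGradient p g ∈
      Submodule.span p.ResidueField (Set.range (residueGradient p ∘ f)) := by
    have hrange : Set.range (residueGradient p ∘ f) = Set.range (residueGradient p ∘ a) :=
      e.symm.surjective.range_comp (residueGradient p ∘ a)
    rw [hrange, hspan]
    exact Submodule.subset_span ⟨g, rfl⟩
  obtain ⟨c, hc⟩ := exists_det_submatrix_ne_zero_of_linearIndependent_row
    (M := Matrix.of (residueGradient p ∘ f)) (hli.comp e.symm e.symm.injective)
  have hle : p.map (algebraMap _ (Localization.AtPrime p)) ≤
      (Ideal.span (Set.range fun i => (f i).1)).map (algebraMap _ (Localization.AtPrime p)) := by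
    refine Submodule.le_of_le_smul_of_le_jacobson_bot (hp.map _)
      (IsLocalRing.maximalIdeal_le_jacobson _)
      ((map_le_map_span_sup_sq_of_residueGradient_mem_span hf).trans_eq ?_)
    rw [Localization.AtPrime.map_eq_maximalIdeal, sq, smul_eq_mul]
  obtain ⟨N, hN, hNf⟩ := exists_notMem_forall_mul_mem_of_map_le hp hle
  refine ⟨r, fun i => (f i).1, c, N, fun i => (f i).2, hN, hNf, ?_⟩
  rw [← Ideal.algebraMap_residueField_eq_zero, RingHom.map_det]
  exact hc

end JacobianCriterion

lemma formallySmooth_residueField_of_comap_C_eq_bot {σ A : Type*} [Finite σ]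
    [CommRing A] [IsDomain A] [CharZero A] {p : Ideal (MvPolynomial σ A)} [p.IsPrime]
    (hp : p.comap C = ⊥) : Algebra.FormallySmooth A p.ResidueField := by
  have hinj : Function.Injective (algebraMap A p.ResidueField) := by
    refine (injective_iff_map_eq_zero _).mpr fun a ha => ?_
    rw [IsScalarTower.algebraMap_apply A (MvPolynomial σ A) p.ResidueField,
      Ideal.algebraMap_residueField_eq_zero] at ha
    exact (Ideal.mem_bot).mp (hp ▸ ha : a ∈ (⊥ : Ideal A))
  have : FaithfulSMul A p.ResidueField := (faithfulSMul_iff_algebraMap_injective A _).mpr hinj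
  let : Algebra (FractionRing A) p.ResidueField := FractionRing.liftAlgebra A p.ResidueField
  have : IsScalarTower A (FractionRing A) p.ResidueField :=
    FractionRing.isScalarTower_liftAlgebra A p.ResidueField
  have : CharZero (FractionRing A) :=
    charZero_of_injective_algebraMap (IsFractionRing.injective A (FractionRing A))
  have : Algebra.EssFiniteType A p.ResidueField := .comp A (MvPolynomial σ A) _
  have : Algebra.EssFiniteType (FractionRing A) p.ResidueField := .of_comp A _ _
  have : Algebra.FormallyEtale A (FractionRing A) := .of_isLocalization (nonZeroDivisors A)
  exact .comp A (FractionRing A) p.ResidueField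

universe v

section SquareSystem

lemma isStandardSmooth_away_of_det_jacobianMatrix_dvd {ι D : Type*} [CommRing D] [Fintype ι]
    [DecidableEq ι] {g : ι → MvPolynomial ι D} {s : MvPolynomial ι D}
    (hs : (jacobianMatrix g).det ∣ s) :
    Algebra.IsStandardSmooth D
      (Localization.Away (Ideal.Quotient.mk (Ideal.span (Set.range g)) s)) := by
  let π := Ideal.Quotient.mk (Ideal.span (Set.range g))
  let P := Algebra.PreSubmersivePresentation.naive (R := D) (v := g) id Function.injective_id
  let Q := Algebra.PreSubmersivePresentation.localizationAway (Localization.Away (π s)) (π s)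
  have hunit : IsUnit (algebraMap _ (Localization.Away (π s)) (π s)) :=
    IsLocalization.Away.algebraMap_isUnit _
  have hP : P.jacobian ∣ π s := by
    have hjac : P.jacobiMatrix = (jacobianMatrix g).transpose := by
      ext1 i j
      exact Algebra.PreSubmersivePresentation.jacobiMatrix_naive ..
    rw [P.jacobian_eq_jacobiMatrix_det, hjac, Matrix.det_transpose]
    exact map_dvd π hs
  let T : Algebra.SubmersivePresentation D (Localization.Away (π s)) _ _ :=
    { Q.comp P with
      jacobian_isUnit := by
        rw [Algebra.PreSubmersivePresentation.comp_jacobian_eq_jacobian_smul_jacobian,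
          Algebra.PreSubmersivePresentation.localizationAway_jacobian, Algebra.smul_def]
        exact (isUnit_of_dvd_unit (map_dvd _ hP) hunit).mul hunit }
  exact T.isStandardSmooth

lemma exists_isStandardSmooth_comp_eq_of_isUnit_det {D : Type u} {ι : Type v} {S : Type*}
    [CommRing D] [CommRing S] [Algebra D S] [Fintype ι] [DecidableEq ι]
    {g : ι → MvPolynomial ι D} {s : MvPolynomial ι D} {ψ : MvPolynomial ι D →ₐ[D] S}
    (hg : ∀ i, ψ (g i) = 0) (hdet : IsUnit (ψ (jacobianMatrix g).det)) (hs : IsUnit (ψ s)) :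
    ∃ (B : Type (max u v)) (_ : CommRing B) (_ : Algebra D B), Algebra.IsStandardSmooth D B ∧
      ∃ (ρ : MvPolynomial ι D →ₐ[D] B) (γ : B →ₐ[D] S),
        (∀ i, ρ (g i) = 0) ∧ IsUnit (ρ s) ∧ γ.comp ρ = ψ := by
  let J := Ideal.span (Set.range g)
  let h := (jacobianMatrix g).det * s
  have hJ : J ≤ RingHom.ker ψ := Ideal.span_le.mpr (Set.range_subset_iff.mpr hg)
  let L := Localization.Away (Ideal.Quotient.mk J h)
  let ψJ : (MvPolynomial ι D ⧸ J) →ₐ[D] S := Ideal.Quotient.liftₐ J ψ fun x hx => hJ hx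
  have hψJ : IsUnit (ψJ (Ideal.Quotient.mk J h)) := by
    change IsUnit (ψ h)
    rw [map_mul]
    exact hdet.mul hs
  let ρ : MvPolynomial ι D →ₐ[D] L :=
    (IsScalarTower.toAlgHom D (MvPolynomial ι D ⧸ J) L).comp (Ideal.Quotient.mkₐ D J)
  have hρh : IsUnit (ρ h) := IsLocalization.Away.algebraMap_isUnit (Ideal.Quotient.mk J h)
  let γ : L →ₐ[D] S :=
    IsLocalization.liftAlgHom (M := Submonoid.powers (Ideal.Quotient.mk J h)) (f := ψJ) (by
      rintro ⟨_, k, rfl⟩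
      simpa using hψJ.pow k)
  refine ⟨L, inferInstance, inferInstance,
    isStandardSmooth_away_of_det_jacobianMatrix_dvd (Dvd.intro _ rfl), ρ, γ, fun i => ?_, ?_, ?_⟩
  · have : Ideal.Quotient.mk J (g i) = 0 :=
      Ideal.Quotient.eq_zero_iff_mem.mpr (Ideal.subset_span ⟨i, rfl⟩)
    simp [ρ, this]
  · exact isUnit_of_mul_isUnit_right ((map_mul ρ _ _).subst hρh)
  · refine AlgHom.ext fun x => ?_
    simp only [γ, ρ, AlgHom.comp_apply, IsScalarTower.coe_toAlgHom',
      IsLocalization.liftAlgHom_apply, IsLocalization.lift_eq]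
    rfl

end SquareSystem

section Newton

variable {σ ι D : Type*} [CommRing D]

lemma constantCoeff_eq_zero_of_mem_idealOfVars {F : MvPolynomial ι D}
    (hF : F ∈ idealOfVars ι D) : constantCoeff F = 0 := by
  have hle : idealOfVars ι D ≤ RingHom.ker constantCoeff :=
    Ideal.span_le.mpr (Set.range_subset_iff.mpr (constantCoeff_X D))
  exact hle hF

lemma pderiv_mem_idealOfVars {Q : MvPolynomial ι D} (hQ : Q ∈ idealOfVars ι D ^ 2) (i : ι) :
    pderiv i Q ∈ idealOfVars ι D := by
  rw [sq] at hQ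
  induction hQ using Submodule.mul_induction_on' with
  | mem_mul_mem a ha b hb =>
    rw [Derivation.leibniz]
    exact add_mem (Ideal.mul_mem_right _ _ ha) (Ideal.mul_mem_right _ _ hb)
  | add a _ b _ ha hb =>
    rw [map_add]
    exact add_mem ha hb

lemma map_constantCoeff_jacobianMatrix [DecidableEq ι] {b : ι → D} {t : D}
    {Q : ι → MvPolynomial ι D} (hQ : ∀ i, Q i ∈ idealOfVars ι D ^ 2) :
    (jacobianMatrix fun i => C (b i) + C t * X i + Q i).map constantCoeff =
      t • (1 : Matrix ι ι D) := by
  ext i j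
  have hQij := constantCoeff_eq_zero_of_mem_idealOfVars (pderiv_mem_idealOfVars (hQ i) j)
  obtain rfl | hij := eq_or_ne i j
  · simp [jacobianMatrix, hQij, Derivation.leibniz]
  · simp [jacobianMatrix, hQij, Derivation.leibniz, hij]

variable [Fintype ι]

/-- The point `y + d • BX`, where `X` is the column of the variables: the candidates for the
Newton correction of an approximate solution `y` in the directions of the columns of `B`. -/
noncomputable def newtonPoint (y : σ → D) (d : D) (B : Matrix σ ι D) (k : σ) :
    MvPolynomial ι D :=
  C (y k) + C d * ∑ j, C (B k j) * X j

lemma sum_C_mul_X_mem_idealOfVars (a : ι → D) : ∑ j, C (a j) * X j ∈ idealOfVars ι D :=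
  sum_mem fun j _ => Ideal.mul_mem_left _ _ (Ideal.subset_span ⟨j, rfl⟩)

lemma constantCoeff_newtonPoint (y : σ → D) (d : D) (B : Matrix σ ι D) (k : σ) :
    constantCoeff (newtonPoint y d B k) = y k := by
  simp [newtonPoint]

section Taylor

variable (y : σ → D) (d : D) (B : Matrix σ ι D)

lemma exists_aeval_newtonPoint_eq [Fintype σ] (F : MvPolynomial σ D) :
    ∃ Q ∈ idealOfVars ι D ^ 2, aeval (newtonPoint y d B) F =
      C (eval y F) + C d * ∑ k, C (eval y (pderiv k F)) * ∑ j, C (B k j) * X j + C d ^ 2 * Q := by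
  obtain ⟨Q, hQ, hF⟩ := exists_aeval_add_mul_eq F (fun k => C (y k))
    (fun k => ∑ j, C (B k j) * X j) (C d : MvPolynomial ι D)
  have haeval (G : MvPolynomial σ D) :
      aeval (fun k => (C (y k) : MvPolynomial ι D)) G = C (eval y G) :=
    (comp_aeval_apply y (Algebra.ofId D (MvPolynomial ι D)) G).symm
  refine ⟨Q, Ideal.pow_right_mono (Ideal.span_le.mpr ?_) 2 hQ, ?_⟩
  · rintro _ ⟨k, rfl⟩
    exact sum_C_mul_X_mem_idealOfVars (B k)
  · simpa only [haeval] using! hF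

lemma exists_aeval_newtonPoint_eq_C_add [Finite σ] (F : MvPolynomial σ D) :
    ∃ G ∈ idealOfVars ι D, aeval (newtonPoint y d B) F = C (eval y F) + C d * G := by
  have := Fintype.ofFinite σ
  obtain ⟨Q, hQ, hF⟩ := exists_aeval_newtonPoint_eq y d B F
  refine ⟨∑ k, C (eval y (pderiv k F)) * ∑ j, C (B k j) * X j + C d * Q, add_mem
    (sum_mem fun k _ => Ideal.mul_mem_left _ _ (sum_C_mul_X_mem_idealOfVars (B k)))
    (Ideal.mul_mem_left _ _ (Ideal.pow_le_self two_ne_zero hQ)), ?_⟩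
  rw [hF]
  ring

end Taylor

lemma exists_aeval_newtonPoint_eq_sq_mul [Fintype σ] [DecidableEq ι] {y : σ → D} {d : D}
    {B : Matrix σ ι D} {f : ι → MvPolynomial σ D} {b : ι → D} {t : D}
    (hf : ∀ i, eval y (f i) = d ^ 2 * b i)
    (hB : (jacobianMatrix f).map (eval y) * B = (d * t) • (1 : Matrix ι ι D)) :
    ∃ Q : ι → MvPolynomial ι D, (∀ i, Q i ∈ idealOfVars ι D ^ 2) ∧
      ∀ i, aeval (newtonPoint y d B) (f i) = C d ^ 2 * (C (b i) + C t * X i + Q i) := by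
  choose Q hQ hfQ using fun i => exists_aeval_newtonPoint_eq y d B (f i)
  refine ⟨Q, hQ, fun i => ?_⟩
  have hlin : ∑ k, C (eval y (pderiv k (f i))) * ∑ j, C (B k j) * X j =
      (C d * C t * X i : MvPolynomial ι D) := by
    calc ∑ k, C (eval y (pderiv k (f i))) * ∑ j, C (B k j) * X j
        = ∑ j, C (((jacobianMatrix f).map (eval y) * B) i j) * (X j : MvPolynomial ι D) := by
          simp only [Matrix.mul_apply, jacobianMatrix, Matrix.map_apply, Matrix.of_apply,
            map_sum, map_mul, Finset.mul_sum, Finset.sum_mul, mul_assoc]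
          exact Finset.sum_comm
      _ = C d * C t * X i := by simp [hB, Matrix.one_apply, apply_ite]
  rw [hfQ, hf, hlin, map_mul, map_pow]
  ring

end Newton

theorem exists_isStandardSmooth_of_approximate_zero {D : Type u} {ι : Type v} {S σ : Type*}
    [CommRing D] [CommRing S] [Algebra D S] [Fintype σ] [Finite ι] [DecidableEq ι]
    {f : ι → MvPolynomial σ D} {N : MvPolynomial σ D} {y : σ → D} {a d t : D} {b : ι → D}
    {B : Matrix σ ι D} (hd : IsRegular d) (hf : ∀ i, eval y (f i) = d ^ 2 * b i)
    (hb : ∀ i, algebraMap D S (b i) = 0)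
    (hB : (jacobianMatrix f).map (eval y) * B = (d * t) • (1 : Matrix ι ι D))
    (hN : a * eval y N = d * t) (ht : algebraMap D S t = 1) :
    ∃ (B' : Type (max u v)) (_ : CommRing B') (_ : Algebra D B'), Algebra.IsStandardSmooth D B' ∧
      ∃ (Y : σ → B') (γ : B' →ₐ[D] S), (∀ k, γ (Y k) = algebraMap D S (y k)) ∧
        ∀ F, N * F ∈ Ideal.span (Set.range f) → aeval Y F = 0 := by
  have := Fintype.ofFinite ι
  obtain ⟨Q, hQ, hfQ⟩ := exists_aeval_newtonPoint_eq_sq_mul hf hB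
  obtain ⟨G, hG, hNG⟩ := exists_aeval_newtonPoint_eq_C_add y d B N
  -- At the Newton point `f = d² g` and `a N = d s`; over `S`, at `X = 0`, the system `g` vanishes
  -- while its Jacobian determinant and `s` take the value `1`.
  let g : ι → MvPolynomial ι D := fun i => C (b i) + C t * X i + Q i
  let s : MvPolynomial ι D := C t + C a * G
  have hs : C a * aeval (newtonPoint y d B) N = C d * s := by
    have : (C a * C (eval y N) : MvPolynomial ι D) = C d * C t := by rw [← map_mul, hN, map_mul]
    rw [hNG]
    linear_combination this
  let ψ : MvPolynomial ι D →ₐ[D] S := aeval 0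
  have hψ (F : MvPolynomial ι D) : ψ F = algebraMap D S (constantCoeff F) := aeval_zero F
  have hψg (i : ι) : ψ (g i) = 0 := by
    simp [hψ, g, hb, constantCoeff_eq_zero_of_mem_idealOfVars
      (Ideal.pow_le_self two_ne_zero (hQ i))]
  have hψs : ψ s = 1 := by simp [hψ, s, constantCoeff_eq_zero_of_mem_idealOfVars hG, ht]
  have hψdet : ψ (jacobianMatrix g).det = 1 := by
    rw [hψ, RingHom.map_det, RingHom.mapMatrix_apply, map_constantCoeff_jacobianMatrix hQ,
      Matrix.det_smul, Matrix.det_one, mul_one, map_pow, ht, one_pow]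
  obtain ⟨B', _, _, hB', ρ, γ, hρg, hρs, hγ⟩ := exists_isStandardSmooth_comp_eq_of_isUnit_det
    hψg (hψdet ▸ isUnit_one) (hψs ▸ isUnit_one)
  have haeval (F : MvPolynomial σ D) :
      aeval (ρ ∘ newtonPoint y d B) F = ρ (aeval (newtonPoint y d B) F) :=
    (comp_aeval_apply _ ρ F).symm
  refine ⟨B', inferInstance, inferInstance, hB', ρ ∘ newtonPoint y d B, γ, fun k => ?_,
    fun F hF => ?_⟩
  · rw [Function.comp_apply, ← AlgHom.comp_apply, hγ, hψ, constantCoeff_newtonPoint]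
  · have hle : Ideal.span (Set.range f) ≤ RingHom.ker (aeval (ρ ∘ newtonPoint y d B)) := by
      refine Ideal.span_le.mpr (Set.range_subset_iff.mpr fun i => ?_)
      simp only [SetLike.mem_coe, RingHom.mem_ker]
      rw [haeval, hfQ, map_mul, hρg, mul_zero]
    have hdF : d • (ρ s * aeval (ρ ∘ newtonPoint y d B) F) = 0 := by
      have hdρ : algebraMap D B' d = ρ (C d) := (ρ.commutes d).symm
      rw [Algebra.smul_def, hdρ, ← mul_assoc, ← map_mul ρ, ← hs, map_mul ρ, ← haeval, mul_assoc,
        ← map_mul (aeval _), RingHom.mem_ker.mp (hle hF), mul_zero]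
    exact hρs.mul_right_eq_zero.mp
      ((Module.Flat.isSMulRegular_of_isRegular hd).right_eq_zero_of_smul hdF)

lemma isStandardSmooth_mvPolynomial (D σ : Type*) [CommRing D] [Finite σ] :
    Algebra.IsStandardSmooth D (MvPolynomial σ D) := by
  let P : Algebra.SubmersivePresentation D (MvPolynomial σ D) σ Empty :=
    { val := X
      σ' := id
      aeval_val_σ' := by simp
      relation := Empty.elim
      span_range_relation_eq_ker := by
        rw [Set.range_eq_empty, Ideal.span_empty, Algebra.Generators.ker_eq_ker_aeval_val, eq_comm,
          ← RingHom.injective_iff_ker_eq_bot]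
        simpa using Function.injective_id
      map := Empty.elim
      map_inj := fun i => i.elim
      jacobian_isUnit := by
        rw [Algebra.PreSubmersivePresentation.jacobian_eq_jacobiMatrix_det]
        simp }
  exact P.isStandardSmooth

lemma one_mem_map_colon_mul_span_det_of_isUnit {A : Type*} [CommRing A] {m n : ℕ}
    {f : Fin m → MvPolynomial (Fin n) A} (c : Fin m ↪ Fin n)
    (hdet : IsUnit (Ideal.Quotient.mk (Ideal.span (Set.range f))
      ((jacobianMatrix f).submatrix id c).det)) :
    1 ∈ Ideal.map (Ideal.Quotient.mk (Ideal.span (Set.range f)))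
      ((Ideal.span (Set.range f)).colon (Ideal.span (Set.range f)) *
        Ideal.span {d : MvPolynomial (Fin n) A |
          ∃ c : Fin m ↪ Fin n, d = (Matrix.of fun i j : Fin m => pderiv (c j) (f i)).det}) := by
  have hcolon : (Ideal.span (Set.range f)).colon (Ideal.span (Set.range f)) = ⊤ :=
    (Submodule.colon_eq_top_iff_subset _).mpr le_rfl
  have hmem := Ideal.mem_map_of_mem (Ideal.Quotient.mk (Ideal.span (Set.range f)))
    (Ideal.subset_span (s := {d | ∃ c : Fin m ↪ Fin n,
      d = (Matrix.of fun i j : Fin m => pderiv (c j) (f i)).det}) ⟨c, rfl⟩)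
  rw [hcolon, Ideal.top_mul, Ideal.eq_top_of_isUnit_mem _ hmem hdet]
  exact Submodule.mem_top

lemma IsStandardSmoothP.of_isStandardSmooth (A B : Type u) [CommRing A] [CommRing B] [Algebra A B]
    [h : Algebra.IsStandardSmooth A B] : IsStandardSmoothP A B := by
  obtain ⟨ι, κ, _, _, ⟨P₀⟩⟩ := h.out
  obtain ⟨n, ⟨e⟩⟩ := Finite.exists_equiv_fin ι
  obtain ⟨m, ⟨e'⟩⟩ := Finite.exists_equiv_fin κ
  let P := P₀.reindex e.symm e'.symm
  let c : Fin m ↪ Fin n := ⟨P.map, P.map_inj⟩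
  have hker : Ideal.span (Set.range P.relation) = RingHom.ker (aeval (R := A) P.val) :=
    P.span_range_relation_eq_ker.trans P.ker_eq_ker_aeval_val
  let ε := (Ideal.quotientEquivAlgOfEq A hker).trans
    (Ideal.quotientKerAlgEquivOfSurjective P.aeval_val_surjective)
  have hdet : IsUnit (aeval P.val ((jacobianMatrix P.relation).submatrix id c).det) := by
    have hM : P.jacobiMatrix.transpose = (jacobianMatrix P.relation).submatrix id c := by
      ext1 i j
      exact P.jacobiMatrix_apply j i
    rw [← hM, ← P.algebraMap_apply, Matrix.det_transpose, ← P.jacobian_eq_jacobiMatrix_det]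
    exact P.jacobian_isUnit
  exact ⟨n, m, by simpa using Fintype.card_le_of_embedding c, _, ε, P.relation,
    fun i => Ideal.subset_span ⟨i, rfl⟩,
    one_mem_map_colon_mul_span_det_of_isUnit c ((isUnit_map_iff ε _).mp hdet)⟩

lemma surjective_algebraMap_residueField_of_surjective {k R S : Type*} [CommRing k] [CommRing R]
    [IsLocalRing R] [CommRing S] [IsLocalRing S] [Algebra k R] [Algebra k S] {φ : R →ₐ[k] S}
    (hφ : Function.Surjective φ)
    (hk : Function.Surjective (algebraMap k (IsLocalRing.ResidueField R))) :
    Function.Surjective (algebraMap k (IsLocalRing.ResidueField S)) := by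
  have : IsLocalHom φ := ⟨(IsLocalHom.of_surjective φ.toRingHom hφ).map_nonunit⟩
  intro x
  obtain ⟨s, rfl⟩ := IsLocalRing.residue_surjective x
  obtain ⟨r, rfl⟩ := hφ s
  obtain ⟨c, hc⟩ := hk (IsLocalRing.residue R r)
  exact ⟨c, ((IsLocalRing.ResidueField.mapAlgHom φ).commutes c).symm.trans (congrArg _ hc)⟩

section CoefficientField

variable {k K R S : Type u} [Field k] [Field K] [Algebra k K] [CommRing R] [IsLocalRing R]
  [Algebra k R] [CommRing S] [Algebra R S] [Module.FaithfullyFlat R S] [Algebra k S]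
  [IsScalarTower k R S]

lemma linearIndependent_comp_of_faithfullyFlat {ι : Type u}
    (hk : Function.Surjective (algebraMap k (IsLocalRing.ResidueField R))) (τ : K →ₐ[k] S)
    {e : ι → K} (he : LinearIndependent k e) : LinearIndependent R (τ ∘ e) := by
  refine Module.IsLocalRing.linearIndependent_of_flat _ ?_
  let q : S →ₐ[R] IsLocalRing.ResidueField R ⊗[R] S := Algebra.TensorProduct.includeRight
  let j := (q.restrictScalars k).comp τ
  refine he.map_of_surjective_injective (algebraMap k (IsLocalRing.ResidueField R))
    j.toLinearMap.toAddMonoidHom hk (fun x hx => (map_eq_zero j).mp hx) fun c x => ?_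
  rw [algebraMap_smul]
  exact map_smul j c x

lemma mem_of_sum_smul_mem_map {ι : Type u}
    (hk : Function.Surjective (algebraMap k (IsLocalRing.ResidueField R))) (τ : K →ₐ[k] S)
    {e : ι → K} (he : LinearIndependent k e) {J : Ideal R} {s : Finset ι} {a : ι → R}
    (h : ∑ i ∈ s, a i • τ (e i) ∈ J.map (algebraMap R S)) {i : ι} (hi : i ∈ s) : a i ∈ J := by
  rcases eq_or_ne J ⊤ with rfl | hJ
  · exact Submodule.mem_top
  have : Nontrivial (R ⧸ J) := Ideal.Quotient.nontrivial_iff.mpr hJ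
  have : IsLocalRing (R ⧸ J) := .of_surjective' _ Ideal.Quotient.mk_surjective
  let q : S →ₐ[R] (R ⧸ J) ⊗[R] S := Algebra.TensorProduct.includeRight
  have hq : J.map (algebraMap R S) ≤ RingHom.ker q := by
    refine Ideal.map_le_iff_le_comap.mpr fun x hx => ?_
    rw [Ideal.mem_comap, RingHom.mem_ker, q.commutes, IsScalarTower.algebraMap_apply R (R ⧸ J),
      Ideal.Quotient.algebraMap_eq, Ideal.Quotient.eq_zero_iff_mem.mpr hx, map_zero]
  have hli := linearIndependent_comp_of_faithfullyFlat
    (surjective_algebraMap_residueField_of_surjective (φ := Ideal.Quotient.mkₐ k J)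
      Ideal.Quotient.mk_surjective hk) ((q.restrictScalars k).comp τ) he
  have hsum : ∑ i ∈ s, Ideal.Quotient.mk J (a i) • ((q.restrictScalars k).comp τ ∘ e) i = 0 := by
    rw [← (hq h : q _ = 0), map_sum]
    refine Finset.sum_congr rfl fun i _ => ?_
    rw [map_smul, ← Ideal.Quotient.algebraMap_eq, algebraMap_smul]
    rfl
  exact Ideal.Quotient.eq_zero_iff_mem.mp (linearIndependent_iff'.mp hli s _ hsum i hi)

lemma mem_map_of_lift_mem_map {E : Type u} [CommRing E] [Algebra k E]
    (hk : Function.Surjective (algebraMap k (IsLocalRing.ResidueField R))) (τ : K →ₐ[k] S)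
    {j : E →ₐ[k] K} (hj : Function.Injective j) {J : Ideal R} {x : R ⊗[k] E}
    (hx : Algebra.TensorProduct.lift (Algebra.ofId R S) (τ.comp j) (fun _ _ => .all _ _) x ∈
      J.map (algebraMap R S)) :
    x ∈ J.map (algebraMap R (R ⊗[k] E)) := by
  let b := Module.Basis.ofVectorSpace k E
  let b' := b.baseChange R
  have hli : LinearIndependent k (j ∘ b) :=
    b.linearIndependent.map' j.toLinearMap (LinearMap.ker_eq_bot.mpr hj)
  rw [← b'.linearCombination_repr x, Finsupp.linearCombination_apply, Finsupp.sum] at hx ⊢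
  have hrepr : ∑ i ∈ (b'.repr x).support, b'.repr x i • τ (j (b i)) ∈ J.map (algebraMap R S) := by
    simpa [b', map_sum] using hx
  refine sum_mem fun i hi => ?_
  rw [Algebra.smul_def]
  exact Ideal.mul_mem_right _ _ (Ideal.mem_map_of_mem _ (mem_of_sum_smul_mem_map hk τ hli hrepr hi))

end CoefficientField

section Approximation

lemma exists_maximalIdeal_pow_le_span_singleton {R : Type*} [CommRing R] [IsDomain R]
    [IsNoetherianRing R] [IsLocalRing R] [Ring.KrullDimLE 1 R] {x : R} (hx : x ≠ 0) :
    ∃ s : ℕ, IsLocalRing.maximalIdeal R ^ s ≤ Ideal.span {x} := by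
  refine Ideal.exists_pow_le_of_le_radical_of_fg ?_ (IsNoetherian.noetherian _)
  rw [Ideal.radical_eq_sInf]
  refine le_sInf fun p ⟨hxp, hp⟩ => ?_
  have hp0 : p ≠ ⊥ := by
    rintro rfl
    exact hx (by simpa using hxp)
  exact (IsLocalRing.eq_maximalIdeal (hp.isMaximal_of_ne_bot hp0)).ge

lemma sup_pow_smul_top_eq_top {R M : Type*} [CommRing R] [AddCommGroup M] [Module R M]
    {I : Ideal R} {W : Submodule R M} (h : W ⊔ I • ⊤ = ⊤) (s : ℕ) :
    W ⊔ I ^ s • (⊤ : Submodule R M) = ⊤ := by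
  induction s with
  | zero => simp
  | succ s ih =>
    refine top_le_iff.mp ?_
    calc ⊤ = W ⊔ I ^ s • (W ⊔ I • ⊤) := by rw [h, ih]
      _ ≤ W ⊔ I ^ (s + 1) • ⊤ := by
        rw [Submodule.smul_sup, ← Submodule.mul_smul, ← pow_succ, ← sup_assoc]
        exact sup_le_sup_right (sup_le le_rfl Submodule.smul_le_right) _

lemma exists_add_smul_eq_of_sup_smul_top_eq_top {R M : Type*} [CommRing R] [AddCommGroup M]
    [Module R M] {I : Ideal R} {W : Submodule R M} (hW : W ⊔ I • ⊤ = ⊤) {δ : R} {s : ℕ}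
    (hδ : I ^ s ≤ Ideal.span {δ}) (x : M) : ∃ a ∈ W, ∃ t, a + δ • t = x := by
  have hx : x ∈ W ⊔ Ideal.span {δ} • ⊤ :=
    sup_le_sup_left (Submodule.smul_mono_left hδ) W
      ((sup_pow_smul_top_eq_top hW s).ge Submodule.mem_top)
  obtain ⟨a, ha, t, ht, rfl⟩ := Submodule.mem_sup.mp hx
  rw [Submodule.ideal_span_singleton_smul] at ht
  obtain ⟨t, -, rfl⟩ := (Submodule.mem_smul_pointwise_iff_exists _ _ _).mp ht
  exact ⟨a, ha, t, rfl⟩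

lemma exists_ne_zero_isStandardSmooth_away {k C : Type*} [Field k] [PerfectField k] [CommRing C]
    [IsDomain C] [Algebra k C] [Algebra.FiniteType k C] :
    ∃ c : C, c ≠ 0 ∧ Algebra.IsStandardSmooth k (Localization.Away c) := by
  have : Algebra.FinitePresentation k C := Algebra.FinitePresentation.of_finiteType.mp ‹_›
  let p : Ideal C := ⊥
  have : IsFractionRing C (Localization.AtPrime p) := by
    have h : p.primeCompl = nonZeroDivisors C := by
      ext x
      simp [p, Ideal.primeCompl]
    change IsLocalization _ _
    rw [← h]
    infer_instance
  let := IsFractionRing.toField C (K := Localization.AtPrime p)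
  have : Algebra.EssFiniteType k (Localization.AtPrime p) := .comp k C _
  have : Algebra.IsSmoothAt k p := Algebra.FormallySmooth.of_perfectField
  exact Algebra.IsSmoothAt.exists_notMem_isStandardSmooth k p

lemma exists_subalgebra_isStandardSmooth_of_finite {k K : Type*} [Field k] [PerfectField k]
    [Field K] [Algebra k K] {T : Set K} (hT : T.Finite) :
    ∃ E : Subalgebra k K, Algebra.IsStandardSmooth k E ∧ T ⊆ E := by
  let C := Algebra.adjoin k T
  have : Algebra.FiniteType k C := C.fg_iff_finiteType.mp (Subalgebra.fg_def.mpr ⟨T, hT, rfl⟩)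
  obtain ⟨c, hc, hsm⟩ := exists_ne_zero_isStandardSmooth_away (k := k) (C := C)
  have hunit (z : Submonoid.powers c) : IsUnit (C.val z) := by
    obtain ⟨_, m, rfl⟩ := z
    have : (c : K) ≠ 0 := fun h => hc (Subtype.ext h)
    simpa using this.isUnit.pow m
  let j : Localization.Away c →ₐ[k] K :=
    IsLocalization.liftAlgHom (M := Submonoid.powers c) (f := C.val) hunit
  have hj : Function.Injective j := (IsLocalization.lift_injective_iff hunit).mpr fun x y =>
    ⟨fun h => congrArg _ (IsLocalization.injective _
      (powers_le_nonZeroDivisors_of_noZeroDivisors hc) h), fun h => congrArg _ (Subtype.ext h)⟩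
  refine ⟨j.range, .of_algEquiv (AlgEquiv.ofInjective j hj), fun x hx => ?_⟩
  exact ⟨algebraMap C _ ⟨x, Algebra.subset_adjoin hx⟩, by simp [j]⟩

lemma exists_isStandardSmooth_forall_dvd_of_subset_range_add {R D₀ S : Type u}
    [CommRing R] [CommRing D₀] [Algebra R D₀] [CommRing S] [Algebra R S]
    [Algebra.IsStandardSmooth R D₀] {w₀ : D₀ →ₐ[R] S} {δ : R}
    (hw₀ : ∀ x, algebraMap R S δ ∣ w₀ x → algebraMap R D₀ δ ∣ x) {T : Set S} (hT : T.Finite)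
    (hTw₀ : ∀ x ∈ T, ∃ α t, w₀ α + algebraMap R S δ * t = x) :
    ∃ (D : Type u) (_ : CommRing D) (_ : Algebra R D), Algebra.IsStandardSmooth R D ∧
      ∃ (w : D →ₐ[R] S) (V : Subalgebra R D), T ⊆ w '' V ∧
        ∀ x ∈ V, algebraMap R S δ ∣ w x → algebraMap R D δ ∣ x := by
  have := hT.to_subtype
  choose α t ht using fun x : T => hTw₀ x x.2
  let D := MvPolynomial T D₀
  let w : D →ₐ[R] S := aevalTower w₀ t
  have hwC (a : D₀) : w (C a) = w₀ a := aevalTower_C ..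
  let ι := IsScalarTower.toAlgHom R D₀ D
  let π := Ideal.Quotient.mkₐ R (Ideal.span {algebraMap R D δ})
  -- `V` consists of the polynomials which are constant modulo `δ`.
  let V := (π.comp ι).range.comap π
  have hV {x : D} : x ∈ V ↔ ∃ a : D₀, algebraMap R D δ ∣ C a - x :=
    exists_congr fun a => Ideal.Quotient.mk_eq_mk_iff_sub_mem (C a) x |>.trans
      Ideal.mem_span_singleton
  have := isStandardSmooth_mvPolynomial D₀ T
  refine ⟨D, inferInstance, inferInstance, .trans R D₀ D, w, V, fun x hx => ?_, fun x hx hδx => ?_⟩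
  · refine ⟨C (α ⟨x, hx⟩) + algebraMap R D δ * X ⟨x, hx⟩, ?_, ?_⟩
    · exact hV.mpr ⟨α ⟨x, hx⟩, -X ⟨x, hx⟩, by ring⟩
    rw [map_add, map_mul, w.commutes, hwC, aevalTower_X]
    exact ht ⟨x, hx⟩
  · obtain ⟨a, ha⟩ := hV.mp hx
    have hwa : algebraMap R S δ ∣ w (C a) := by
      have := map_dvd w ha
      rw [map_sub, w.commutes] at this
      exact (dvd_sub_left hδx).mp this
    exact (dvd_sub_right (map_dvd C (hw₀ a (hwC a ▸ hwa)))).mp ha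

variable {k K R S : Type u} [Field k] [Field K] [Algebra k K] [CommRing R]
  [Algebra k R] [CommRing S] [Algebra R S] [Algebra k S] [IsScalarTower k R S]

lemma exists_subalgebra_isStandardSmooth_subset_range_lift [PerfectField k] (τ : K →ₐ[k] S)
    {T : Set S} (hT : T.Finite) (hTτ : T ⊆ Submodule.span R (Set.range τ)) :
    ∃ E : Subalgebra k K, Algebra.IsStandardSmooth k E ∧ T ⊆
      (Algebra.TensorProduct.lift (Algebra.ofId R S) (τ.comp E.val) fun _ _ => .all _ _).range := by
  classical
  lift T to Finset S using hT
  obtain ⟨U, hUτ, hTU⟩ := Submodule.subset_span_finite_of_subset_span hTτ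
  rw [← Set.image_univ, Finset.subset_set_image_iff] at hUτ
  obtain ⟨U, -, rfl⟩ := hUτ
  obtain ⟨E, hE, hUE⟩ := exists_subalgebra_isStandardSmooth_of_finite (k := k) U.finite_toSet
  let w := Algebra.TensorProduct.lift (Algebra.ofId R S) (τ.comp E.val) fun _ _ => .all _ _
  refine ⟨E, hE, hTU.trans (Submodule.span_le (p := w.range.toSubmodule).mpr ?_)⟩
  rw [Finset.coe_image]
  rintro _ ⟨x, hx, rfl⟩
  exact ⟨1 ⊗ₜ ⟨x, hUE hx⟩, by simp [w]⟩

lemma algebraMap_dvd_of_dvd_lift [IsLocalRing R] [Module.FaithfullyFlat R S]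
    (hk : Function.Surjective (algebraMap k (IsLocalRing.ResidueField R))) (τ : K →ₐ[k] S)
    (E : Subalgebra k K) {δ : R} {x : R ⊗[k] E} (hx : algebraMap R S δ ∣
      Algebra.TensorProduct.lift (Algebra.ofId R S) (τ.comp E.val) (fun _ _ => .all _ _) x) :
    algebraMap R (R ⊗[k] E) δ ∣ x := by
  have := mem_map_of_lift_mem_map hk τ (j := E.val) Subtype.val_injective
    (J := Ideal.span {δ}) (x := x)
  rw [Ideal.map_span, Set.image_singleton, Ideal.mem_span_singleton, Ideal.map_span,
    Set.image_singleton, Ideal.mem_span_singleton] at this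
  exact this hx

lemma exists_isStandardSmooth_forall_dvd [IsLocalRing R] [Module.FaithfullyFlat R S]
    [PerfectField k] (hk : Function.Surjective (algebraMap k (IsLocalRing.ResidueField R)))
    {τ : K →ₐ[k] S}
    (hτ : ∀ x, ∃ c, x - τ c ∈ (IsLocalRing.maximalIdeal R).map (algebraMap R S))
    {δ : R} {s : ℕ} (hδ : IsLocalRing.maximalIdeal R ^ s ≤ Ideal.span {δ})
    {T : Set S} (hT : T.Finite) :
    ∃ (D : Type u) (_ : CommRing D) (_ : Algebra R D), Algebra.IsStandardSmooth R D ∧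
      ∃ (w : D →ₐ[R] S) (V : Subalgebra R D), T ⊆ w '' V ∧
        ∀ x ∈ V, algebraMap R S δ ∣ w x → algebraMap R D δ ∣ x := by
  have hW : Submodule.span R (Set.range τ) ⊔ IsLocalRing.maximalIdeal R • ⊤ = ⊤ := by
    refine Submodule.eq_top_iff'.mpr fun x => ?_
    obtain ⟨c, hc⟩ := hτ x
    rw [← add_sub_cancel (τ c) x, Ideal.smul_top_eq_map]
    exact Submodule.add_mem_sup (Submodule.subset_span ⟨c, rfl⟩) hc
  choose a ha t hat using exists_add_smul_eq_of_sup_smul_top_eq_top hW hδ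
  obtain ⟨E, hE, hEa⟩ := exists_subalgebra_isStandardSmooth_subset_range_lift τ (hT.image a)
    (Set.image_subset_iff.mpr fun x _ => ha x)
  refine exists_isStandardSmooth_forall_dvd_of_subset_range_add
    (fun x => algebraMap_dvd_of_dvd_lift hk τ E) hT fun x hx => ?_
  obtain ⟨α, hα⟩ := hEa ⟨x, hx, rfl⟩
  exact ⟨α, t x, by rw [← Algebra.smul_def]; exact (congrArg (· + δ • t x) hα).trans (hat x)⟩

end Approximation

section Factorization

lemma map_jacobianMatrix_map {ι σ R D : Type*} [CommSemiring R] [CommSemiring D] [Algebra R D]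
    (f : ι → MvPolynomial σ R) (y : σ → D) :
    (jacobianMatrix fun i => map (algebraMap R D) (f i)).map (eval y) =
      (jacobianMatrix f).map (aeval y) := by
  ext i j
  simp [jacobianMatrix, pderiv_map, eval_map, aeval_def]

lemma isRegular_algebraMap_of_flat {R D : Type*} [CommRing R] [CommRing D] [Algebra R D]
    [Module.Flat R D] {d : R} (hd : IsRegular d) : IsRegular (algebraMap R D d) := by
  rw [← isLeftRegular_iff_isRegular]
  intro x y hxy
  exact Module.Flat.isSMulRegular_of_isRegular hd (by simpa [Algebra.smul_def] using hxy)

lemma aeval_mem_of_forall_mem {R D σ : Type*} [CommSemiring R] [CommSemiring D] [Algebra R D]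
    {V : Subalgebra R D} {y : σ → D} (hy : ∀ k, y k ∈ V) (F : MvPolynomial σ R) :
    aeval y F ∈ V := by
  have hle : Algebra.adjoin R (Set.range y) ≤ V := Algebra.adjoin_le (Set.range_subset_iff.mpr hy)
  exact hle (Algebra.adjoin_range_eq_range_aeval R y ▸ ⟨F, rfl⟩)

lemma exists_isStandardSmooth_of_approximate_aeval_zero {A D : Type u} {S σ : Type*} [CommRing A]
    [CommRing D] [Algebra A D] [Algebra.IsStandardSmooth A D] [CommRing S] [Algebra A S]
    [Finite σ] (w : D →ₐ[A] S) {r : ℕ} {f : Fin r → MvPolynomial σ A} {c : Fin r → σ}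
    {N : MvPolynomial σ A} {y : σ → D} {z t : D} {b : Fin r → D} {d : A} (hd : IsRegular d)
    (hf : ∀ i, aeval y (f i) = algebraMap A D d ^ 2 * b i) (hb : ∀ i, w (b i) = 0)
    (hN : z * aeval y (N * ((jacobianMatrix f).submatrix id c).det) = algebraMap A D d * t)
    (ht : w t = 1) :
    ∃ (B' : Type u) (_ : CommRing B') (_ : Algebra A B'), Algebra.IsStandardSmooth A B' ∧
      ∃ (Y : σ → B') (γ : B' →ₐ[A] S), (∀ k, γ (Y k) = w (y k)) ∧
        ∀ F, N * F ∈ Ideal.span (Set.range f) → aeval Y F = 0 := by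
  have := Fintype.ofFinite σ
  let Δ := ((jacobianMatrix f).submatrix id c).det
  have heval (F : MvPolynomial σ A) : eval y (map (algebraMap A D) F) = aeval y F := by
    rw [eval_map, aeval_def]
  have hdet : (((jacobianMatrix f).map (aeval y)).submatrix id c).det = aeval y Δ :=
    ((aeval y).map_det _).symm
  obtain ⟨B, hB⟩ := exists_mul_eq_det_submatrix_smul_one ((jacobianMatrix f).map (aeval y)) c
  rw [map_mul, ← mul_assoc] at hN
  let : Algebra D S := w.toRingHom.toAlgebra
  have : IsScalarTower A D S := .of_algebraMap_eq fun a => (w.commutes a).symm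
  obtain ⟨B', _, _, hB', Y, γ, hγ, hY⟩ := exists_isStandardSmooth_of_approximate_zero (S := S)
    (f := fun i => map (algebraMap A D) (f i)) (N := map (algebraMap A D) N)
    (a := z * aeval y Δ) (B := (z * aeval y N) • B) (isRegular_algebraMap_of_flat hd)
    (fun i => by rw [heval, hf]) hb
    (by rw [map_jacobianMatrix_map, Matrix.mul_smul, hB, hdet, smul_smul, hN])
    (by rw [heval, ← hN, mul_right_comm]) ht
  let : Algebra A B' := ((algebraMap D B').comp (algebraMap A D)).toAlgebra
  have : IsScalarTower A D B' := .of_algebraMap_eq' rfl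
  refine ⟨B', inferInstance, inferInstance, .trans A D B', Y, γ.restrictScalars A, hγ,
    fun F hF => ?_⟩
  rw [← aeval_map_algebraMap D]
  refine hY _ ?_
  have := Ideal.mem_map_of_mem (map (algebraMap A D)) hF
  rwa [map_mul, Ideal.map_span, ← Set.range_comp] at this

lemma exists_isStandardSmooth_of_forall_dvd {A D : Type u} {S σ : Type*} [CommRing A]
    [IsDomain A] [CommRing D] [Algebra A D] [Algebra.IsStandardSmooth A D] [CommRing S] [IsDomain S]
    [Algebra A S] [Finite σ] {w : D →ₐ[A] S} {V : Subalgebra A D}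
    {d : A} (hd : algebraMap A S d ≠ 0)
    (hV : ∀ x ∈ V, algebraMap A S (d ^ 2) ∣ w x → algebraMap A D (d ^ 2) ∣ x)
    {y : σ → D} (hy : ∀ k, y k ∈ V) {z : D} (hz : z ∈ V) {r : ℕ} {f : Fin r → MvPolynomial σ A}
    (hf : ∀ i, aeval (w ∘ y) (f i) = 0) {c : Fin r → σ} {N : MvPolynomial σ A}
    (hN : w z * aeval (w ∘ y) (N * ((jacobianMatrix f).submatrix id c).det) = algebraMap A S d) :
    ∃ (B' : Type u) (_ : CommRing B') (_ : Algebra A B'), Algebra.IsStandardSmooth A B' ∧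
      ∃ (Y : σ → B') (γ : B' →ₐ[A] S), (∀ k, γ (Y k) = w (y k)) ∧
        ∀ F, N * F ∈ Ideal.span (Set.range f) → aeval Y F = 0 := by
  have hdvd {x : D} (hx : x ∈ V) (hwx : w x = 0) : ∃ b, x = algebraMap A D d ^ 2 * b ∧ w b = 0 := by
    obtain ⟨b, rfl⟩ := hV x hx (hwx ▸ dvd_zero _)
    rw [map_mul, w.commutes, map_pow, mul_eq_zero] at hwx
    exact ⟨b, by rw [map_pow], hwx.resolve_left (pow_ne_zero 2 hd)⟩
  have hwy (F : MvPolynomial σ A) : w (aeval y F) = aeval (w ∘ y) F := comp_aeval_apply y w F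
  choose b hb hwb using fun i =>
    hdvd (aeval_mem_of_forall_mem hy (f i)) ((hwy _).trans (hf i))
  obtain ⟨e, he, hwe⟩ := hdvd
    (sub_mem (mul_mem hz (aeval_mem_of_forall_mem hy (N * _))) (V.algebraMap_mem d))
    (by rw [map_sub, map_mul, hwy, hN, w.commutes, sub_self])
  have hd0 : d ≠ 0 := by
    rintro rfl
    exact hd (map_zero _)
  have ht : z * aeval y (N * ((jacobianMatrix f).submatrix id c).det) =
      algebraMap A D d * (1 + algebraMap A D d * e) := by
    linear_combination he
  exact exists_isStandardSmooth_of_approximate_aeval_zero w (.of_ne_zero hd0) hb hwb ht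
    (by simp [hwe])

lemma exists_ne_zero_dvd_algebraMap {R S : Type*} [CommRing R] [IsDomain R] [IsLocalRing R]
    (hR : ¬ IsField R) [CommRing S] [IsDomain S] [IsNoetherianRing S] [IsLocalRing S]
    [Ring.KrullDimLE 1 S] [Algebra R S] [IsLocalHom (algebraMap R S)] {x : S} (hx : x ≠ 0) :
    ∃ d : R, d ≠ 0 ∧ x ∣ algebraMap R S d := by
  obtain ⟨s, hs⟩ := exists_maximalIdeal_pow_le_span_singleton hx
  obtain ⟨m, hm, hm0⟩ := Submodule.exists_mem_ne_zero_of_ne_bot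
    (mt IsLocalRing.isField_iff_maximalIdeal_eq.mpr hR)
  refine ⟨m ^ s, pow_ne_zero s hm0, ?_⟩
  rw [← Ideal.mem_span_singleton, map_pow]
  exact hs (Ideal.pow_mem_pow (map_nonunit (algebraMap R S) m hm) s)

lemma exists_factorization_of_forall_aeval_eq_zero {A B B' S σ : Type*} [CommRing A] [CommRing B]
    [Algebra A B] [CommRing B'] [Algebra A B'] [CommRing S] [Algebra A S]
    {q : MvPolynomial σ A →ₐ[A] B} (hq : Function.Surjective q) (v : B →ₐ[A] S) {Y : σ → B'}
    {g : B' →ₐ[A] S} (hg : ∀ k, g (Y k) = v (q (X k))) (hY : ∀ F, q F = 0 → aeval Y F = 0) :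
    ∃ f : B →ₐ[A] B', g.comp f = v := by
  have hker : RingHom.ker q.toRingHom ≤ RingHom.ker (aeval (R := A) Y).toRingHom := hY
  refine ⟨AlgHom.liftOfSurjective q hq (aeval Y) hker, ?_⟩
  rw [← AlgHom.cancel_right hq, AlgHom.comp_assoc, AlgHom.liftOfSurjective_comp]
  exact algHom_ext fun k => by simp [hg]

theorem exists_isStandardSmooth_factorization {k K A S B : Type u} [Field k] [PerfectField k]
    [Field K] [Algebra k K] [CommRing A] [IsDomain A] [CharZero A] [IsNoetherianRing A]
    [IsLocalRing A] [Ring.KrullDimLE 1 A] (hA : ¬ IsField A) [CommRing S] [IsDomain S]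
    [IsNoetherianRing S] [IsLocalRing S] [Ring.KrullDimLE 1 S] [Algebra A S]
    [IsLocalHom (algebraMap A S)] [Module.Flat A S] [Algebra k A] [Algebra k S]
    [IsScalarTower k A S] (hk : Function.Surjective (algebraMap k (IsLocalRing.ResidueField A)))
    {τ : K →ₐ[k] S}
    (hτ : ∀ x, ∃ c, x - τ c ∈ (IsLocalRing.maximalIdeal A).map (algebraMap A S))
    [CommRing B] [Algebra A B] [Algebra.FiniteType A B] (v : B →ₐ[A] S) :
    ∃ (B' : Type u) (_ : CommRing B') (_ : Algebra A B'), Algebra.IsStandardSmooth A B' ∧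
      ∃ (f : B →ₐ[A] B') (g : B' →ₐ[A] S), g.comp f = v := by
  have : Module.FaithfullyFlat A S := .of_flat_of_isLocalHom
  have hinj : Function.Injective (algebraMap A S) := FaithfulSMul.algebraMap_injective A S
  obtain ⟨n, q, hq⟩ := Algebra.FiniteType.iff_quotient_mvPolynomial''.mp ‹Algebra.FiniteType A B›
  let y (i : Fin n) : S := v (q (X i))
  have hvq (F : MvPolynomial (Fin n) A) : v (q F) = aeval y F :=
    AlgHom.congr_fun (aeval_unique (v.comp q)) F
  let p := RingHom.ker (aeval (R := A) y)
  have hp : p.comap C = ⊥ := by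
    refine eq_bot_iff.mpr fun a ha => hinj ?_
    simpa [p, RingHom.mem_ker] using ha
  have : p.IsPrime := RingHom.ker_isPrime _
  have := formallySmooth_residueField_of_comap_C_eq_bot hp
  obtain ⟨r, f, c, N, hfp, hNp, hN, hΔ⟩ :=
    exists_det_jacobianMatrix_submatrix_notMem (IsNoetherian.noetherian p)
  obtain ⟨d, hd0, z, hz⟩ := exists_ne_zero_dvd_algebraMap hA
    (x := aeval y (N * ((jacobianMatrix f).submatrix id c).det))
    (fun h => (Ideal.IsPrime.mem_or_mem ‹_› h).elim hNp hΔ)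
  obtain ⟨s, hs⟩ := exists_maximalIdeal_pow_le_span_singleton (pow_ne_zero 2 hd0)
  obtain ⟨D, _, _, hD, w, V, hV, hVd⟩ := exists_isStandardSmooth_forall_dvd hk hτ hs
    ((Set.finite_range y).insert z)
  rw [Set.insert_subset_iff, Set.range_subset_iff] at hV
  obtain ⟨⟨z', hz', rfl⟩, hV⟩ := hV
  choose y' hy' hwy' using hV
  have hwy' : w ∘ y' = y := funext hwy'
  obtain ⟨B', _, _, hB', Y, γ, hγ, hY⟩ := exists_isStandardSmooth_of_forall_dvd
    (fun h => hd0 (hinj (h.trans (map_zero _).symm))) hVd hy' hz' (f := f) (c := c) (N := N)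
    (fun i => hwy' ▸ hfp i) (by rw [hwy', hz, mul_comm])
  obtain ⟨φ, hφ⟩ := exists_factorization_of_forall_aeval_eq_zero hq v
    (fun k => (hγ k).trans (congrFun hwy' k))
    fun F hF => hY F (hN F (by rw [RingHom.mem_ker, ← hvq, hF, map_zero]))
  exact ⟨B', inferInstance, inferInstance, hB', φ, γ, hφ⟩

end Factorization

lemma apply_algebraMap_residueField_eq_of_mem_range {R S : Type*} [CommRing R]
    [IsLocalRing R] [CommRing S] [IsLocalRing S] [Algebra R S] [IsLocalHom (algebraMap R S)]
    {σ : IsLocalRing.ResidueField R →+* R} {τ : IsLocalRing.ResidueField S →+* S}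
    (hσ : ∀ c, IsLocalRing.residue R (σ c) = c) (hτ : ∀ c, IsLocalRing.residue S (τ c) = c)
    (hστ : ∀ c, algebraMap R S (σ c) ∈ τ.range) (c : IsLocalRing.ResidueField R) :
    τ (algebraMap _ (IsLocalRing.ResidueField S) c) = algebraMap R S (σ c) := by
  obtain ⟨b, hb⟩ := hστ c
  have hres : IsLocalRing.residue S (algebraMap R S (σ c)) = algebraMap _ _ c :=
    congrArg (algebraMap _ (IsLocalRing.ResidueField S)) (hσ c)
  rw [← hres, ← hb, hτ]

theorem stmt1 (A A' : Type u) [CommRing A] [CommRing A']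
    [IsDomain A] [IsDomain A'] [IsNoetherianRing A] [IsNoetherianRing A']
    [IsLocalRing A] [IsLocalRing A']
    (hdimA : ringKrullDim A = 1) (hdimA' : ringKrullDim A' = 1)
    [Algebra A A'] [IsLocalHom (algebraMap A A')] (hflat : Module.Flat A A')
    (hmax : (IsLocalRing.maximalIdeal A).map (algebraMap A A')
      = IsLocalRing.maximalIdeal A')
    [Algebra ℚ A]
    (hsec : ∃ (σ : (A ⧸ IsLocalRing.maximalIdeal A) →+* A)
        (σ' : (A' ⧸ IsLocalRing.maximalIdeal A') →+* A'),
      (Ideal.Quotient.mk (IsLocalRing.maximalIdeal A)).comp σ = RingHom.id _ ∧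
      (Ideal.Quotient.mk (IsLocalRing.maximalIdeal A')).comp σ' = RingHom.id _ ∧
      ∀ x, algebraMap A A' (σ x) ∈ σ'.range)
    (B : Type u) [CommRing B] [Algebra A B] [Algebra.FiniteType A B]
    (v : B →ₐ[A] A') :
    ∃ (B' : Type u) (_ : CommRing B') (_ : Algebra A B'), IsStandardSmoothP A B' ∧
      ∃ (f : B →ₐ[A] B') (g : B' →ₐ[A] A'), g.comp f = v := by
  obtain ⟨σ, σ', hσ, hσ', hrange⟩ := hsec
  let k := IsLocalRing.ResidueField A
  let K := IsLocalRing.ResidueField A'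
  have hσ (c : k) : IsLocalRing.residue A (σ c) = c := RingHom.congr_fun hσ c
  have hσ' (c : K) : IsLocalRing.residue A' (σ' c) = c := RingHom.congr_fun hσ' c
  have hσσ' := apply_algebraMap_residueField_eq_of_mem_range hσ hσ' hrange
  let : Algebra k A := RingHom.toAlgebra (R := k) σ
  let : Algebra k A' := ((algebraMap A A').comp (algebraMap k A)).toAlgebra
  have : IsScalarTower k A A' := .of_algebraMap_eq fun _ => rfl
  have : CharZero A := algebraRat.charZero A
  have : CharZero k := algebraRat.charZero k
  have : Ring.KrullDimLE 1 A := (Order.krullDimLE_iff _ _).mpr hdimA.le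
  have : Ring.KrullDimLE 1 A' := (Order.krullDimLE_iff _ _).mpr hdimA'.le
  obtain ⟨B', _, _, hB', h⟩ := exists_isStandardSmooth_factorization (k := k) (K := K)
    (fun hA => by simpa [hdimA] using ringKrullDim_eq_zero_of_isField hA)
    (fun x => ⟨x, hσ x⟩) (τ := { (σ' : K →+* A') with commutes' := hσσ' })
    (fun x => ⟨IsLocalRing.residue A' x, by
      rw [hmax, ← IsLocalRing.residue_eq_zero_iff, map_sub, sub_eq_zero]
      exact (hσ' _).symm⟩) v
  exact ⟨B', inferInstance, inferInstance, .of_isStandardSmooth A B', h⟩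
end

section
/- Let u : A → A' be a flat local homomorphism of Noetherian local domains of Krull dimension one, with maximal ideals m ⊆ A and m' ⊆ A', such that mA' = m'. Assume ℚ ⊆ A, and that there exist ring homomorphisms k → A and k' → A' splitting the quotient maps A → k := A/m and A' → k' := A'/mA' respectively, with u(k) ⊆ k'. Let B be a finite type A-algebra, v : B → A' an A-algebra homomorphism, and d a nonzero element of m. Then there exists a smooth A-algebra D such that the induced A/d³A-algebra homomorphism v̄ : B/d³B → A'/d³A' factors through (A/d³A) ⊗_A D, i.e. v̄ is a composite B/d³B → (A/d³A) ⊗_A D → A'/d³A'. -/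
universe u

open TensorProduct

/-!
Write `R = A ⧸ d³A` and `R' = A' ⧸ d³A'`. As `d` is nonzero and `A` is a domain of dimension one,
`R` is local with nilpotent maximal ideal. A basis of `k'` over `k` is linearly independent over `R`
in `R'` by flatness, and generates `R'` by the nilpotent Nakayama lemma because `mA' = m'`; hence
`R' = R ⊗[k] k'`. Since `k` is perfect, `k'` is a filtered union of smooth `k`-subalgebras `T`, and
the image of the finite type algebra `B` already lies in some `R ⊗[k] T = R ⊗[A] D`, where
`D = A ⊗[k] T` is smooth over `A`.
-/

universe v

open IsLocalRing

theorem eq_top_of_sup_smul_top_eq_top {R M : Type*} [CommRing R] [AddCommGroup M] [Module R M]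
    {I : Ideal R} (hI : IsNilpotent I) {N : Submodule R M} (h : N ⊔ I • ⊤ = ⊤) : N = ⊤ := by
  have pow_sup (n : ℕ) : N ⊔ I ^ n • ⊤ = ⊤ := by
    induction n with
    | zero => simp
    | succ n ih =>
      rw [eq_top_iff]
      calc ⊤ = N ⊔ I ^ n • (N ⊔ I • ⊤) := by rw [h, ih]
        _ = (N ⊔ I ^ n • N) ⊔ I ^ (n + 1) • ⊤ := by
          rw [Submodule.smul_sup, ← Submodule.mul_smul, ← pow_succ, sup_assoc]
        _ ≤ N ⊔ I ^ (n + 1) • ⊤ := by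
          gcongr
          exact sup_le le_rfl Submodule.smul_le_right
  obtain ⟨n, hn⟩ := hI
  simpa [hn] using pow_sup n

theorem isBaseChange_of_basis {R S V W ι : Type*} [CommRing R] [CommRing S] [Algebra R S]
    [AddCommGroup V] [Module R V] [AddCommGroup W] [Module R W] [Module S W] [IsScalarTower R S W]
    (b : Module.Basis ι R V) (c : Module.Basis ι S W) {f : V →ₗ[R] W} (h : ∀ i, f (b i) = c i) :
    IsBaseChange S f := by
  let e : S ⊗[R] V ≃ₗ[S] W := (b.baseChange S).equiv c (.refl ι)
  refine .of_equiv e fun x ↦ LinearMap.congr_fun (f := (e.restrictScalars R).toLinearMap ∘ₗ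
    TensorProduct.mk R S V 1) (b.ext fun i ↦ ?_) x
  have basis_tmul : (1 : S) ⊗ₜ[R] b i = b.baseChange S i := (b.baseChange_apply S i).symm
  simp [basis_tmul, e, h, -Module.Basis.baseChange_apply]

theorem exists_comp_eq_of_range_le {A B C E : Type*} [CommRing A] [CommRing B] [CommRing C]
    [CommRing E] [Algebra A B] [Algebra A C] [Algebra A E] {F : C →ₐ[A] E}
    (hF : Function.Injective F) {w : B →ₐ[A] E} (hw : w.range ≤ F.range) :
    ∃ g : B →ₐ[A] C, F.comp g = w := by
  let e := AlgEquiv.ofInjective F hF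
  have hwF (b : B) : w b ∈ F.range := hw ⟨b, rfl⟩
  refine ⟨e.symm.toAlgHom.comp (w.codRestrict F.range hwF), AlgHom.ext fun b ↦ ?_⟩
  exact congrArg Subtype.val (e.apply_symm_apply ⟨w b, hwF b⟩)

theorem exists_maximalIdeal_pow_le_span_singleton_s2 {A : Type*} [CommRing A] [IsNoetherianRing A]
    [IsLocalRing A] (hdim : ringKrullDim A ≤ 1) {d : A} (hd : d ∈ nonZeroDivisors A) :
    ∃ n, maximalIdeal A ^ n ≤ Ideal.span {d} := by
  have hdim_quotient : ringKrullDim (A ⧸ Ideal.span {d}) ≤ 0 :=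
    ENat.WithBot.add_le_add_one_right_iff.mp
      ((ringKrullDim_quotient_succ_le_of_nonZeroDivisor hd).trans hdim)
  have : Ring.KrullDimLE 0 (A ⧸ Ideal.span {d}) := Ring.krullDimLE_iff.mpr hdim_quotient
  have : IsArtinianRing (A ⧸ Ideal.span {d}) := IsNoetherianRing.isArtinianRing_of_krullDimLE_zero
  exact exists_maximalIdeal_pow_le_of_isArtinianRing_quotient _

section PerfectField

variable {k : Type*} [Field k] [PerfectField k]

theorem exists_smooth_away_of_perfectField {S : Type*} [CommRing S] [IsDomain S] [Algebra k S]
    [Algebra.FiniteType k S] : ∃ f : S, f ≠ 0 ∧ Algebra.Smooth k (Localization.Away f) := by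
  have : Algebra.FinitePresentation k S := Algebra.FinitePresentation.of_finiteType.mp ‹_›
  have : Algebra.EssFiniteType S (FractionRing S) := .of_isLocalization _ (nonZeroDivisors S)
  have : Algebra.EssFiniteType k (FractionRing S) := .comp k S _
  have : IsLocalization (⊥ : Ideal S).primeCompl (FractionRing S) := by
    rw [Ideal.primeCompl_bot]
    infer_instance
  have : Algebra.IsSmoothAt k (⊥ : Ideal S) :=
    .of_equiv ((IsLocalization.algEquiv (⊥ : Ideal S).primeCompl (FractionRing S)
      (Localization.AtPrime (⊥ : Ideal S))).restrictScalars k)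
  exact Algebra.IsSmoothAt.exists_notMem_smooth k (⊥ : Ideal S)

theorem exists_smooth_subalgebra_ge {K : Type*} [Field K] [Algebra k K]
    {S : Subalgebra k K} (hS : S.FG) : ∃ T : Subalgebra k K, S ≤ T ∧ Algebra.Smooth k T := by
  have : Algebra.FiniteType k S := S.fg_iff_finiteType.mp hS
  obtain ⟨f, hf, _⟩ := exists_smooth_away_of_perfectField (k := k) (S := S)
  have isUnit_powers (y : Submonoid.powers f) : IsUnit (S.val y) := by
    obtain ⟨_, n, rfl⟩ := y
    simp [hf]
  let φ : Localization.Away f →ₐ[k] K := IsLocalization.liftAlgHom isUnit_powers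
  have hφ : Function.Injective φ := by
    refine (IsLocalization.lift_injective_iff _).mpr fun x y ↦ ?_
    rw [(IsLocalization.injective (Localization.Away f)
      (powers_le_nonZeroDivisors_of_noZeroDivisors hf)).eq_iff]
    exact Subtype.val_injective.eq_iff.symm
  refine ⟨φ.range, fun x hx ↦ ⟨algebraMap S _ ⟨x, hx⟩, by simp [φ]⟩, ?_⟩
  exact .of_equiv (AlgEquiv.ofInjective φ hφ)

theorem exists_smooth_subalgebra_subset_range_map {R K : Type*} [CommRing R] [Algebra k R]
    [Field K] [Algebra k K] {s : Set (R ⊗[k] K)} (hs : s.Finite) :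
    ∃ T : Subalgebra k K, Algebra.Smooth k T ∧
      s ⊆ Set.range (Algebra.TensorProduct.map (.id R R) T.val) := by
  obtain ⟨N, hN, hsN⟩ := TensorProduct.exists_finite_submodule_right_of_setFinite s hs
  obtain ⟨t, ht⟩ := Module.Finite.iff_fg.mp hN
  obtain ⟨T, htT, hT⟩ := exists_smooth_subalgebra_ge (Subalgebra.fg_adjoin_finset (R := k) t)
  have hNT : N ≤ T.toSubmodule := by
    rw [← ht]
    exact (Algebra.span_le_adjoin k _).trans htT
  refine ⟨T, hT, hsN.trans ?_⟩
  rw [← Submodule.subtype_comp_inclusion _ _ hNT, LinearMap.lTensor_comp]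
  exact LinearMap.range_comp_le_range _ _

theorem exists_smooth_factorization_tensorProduct {K A B R : Type*} [Field K] [Algebra k K]
    [CommRing A] [CommRing B] [CommRing R] [Algebra k A] [Algebra A B] [Algebra.FiniteType A B]
    [Algebra A R] [Algebra k R] [IsScalarTower k A R] (w : B →ₐ[A] R ⊗[k] K) :
    ∃ T : Subalgebra k K, Algebra.Smooth k T ∧ ∃ g : B →ₐ[A] R ⊗[k] T,
      ((Algebra.TensorProduct.map (.id R R) T.val).restrictScalars A).comp g = w := by
  obtain ⟨s, hs⟩ := Algebra.FiniteType.out (R := A) (A := B)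
  obtain ⟨T, hT, hwT⟩ :=
    exists_smooth_subalgebra_subset_range_map (R := R) (s.finite_toSet.image w)
  refine ⟨T, hT, exists_comp_eq_of_range_le ?_ ?_⟩
  · exact Module.Flat.lTensor_preserves_injective_linearMap (M := R) T.val.toLinearMap
      Subtype.val_injective
  · rw [← Algebra.map_top, ← hs, AlgHom.map_adjoin]
    exact Algebra.adjoin_le hwT

theorem exists_smooth_factorization_of_isPushout {A : Type u} {k' : Type v} {B R R' : Type*}
    [Field k'] [CommRing A] [CommRing B] [CommRing R] [CommRing R']
    [Algebra k k'] [Algebra k A] [Algebra k R] [Algebra k R'] [Algebra k' R'] [Algebra A B]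
    [Algebra A R] [Algebra A R'] [Algebra R R'] [IsScalarTower k A R] [IsScalarTower k R R']
    [IsScalarTower k k' R'] [IsScalarTower A R R'] [Algebra.IsPushout k R k' R']
    [Algebra.FiniteType A B] (w : B →ₐ[A] R') :
    ∃ (D : Type (max u v)) (_ : CommRing D) (_ : Algebra A D), Algebra.Smooth A D ∧
      ∃ (g : B →ₐ[A] R ⊗[A] D) (h : R ⊗[A] D →ₐ[A] R'), h.comp g = w := by
  let e : R ⊗[k] k' ≃ₐ[A] R' := (Algebra.IsPushout.equiv k R k' R').restrictScalars A
  obtain ⟨T, _, g, hg⟩ := exists_smooth_factorization_tensorProduct (e.symm.toAlgHom.comp w)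
  let c : R ⊗[A] (A ⊗[k] T) ≃ₐ[A] R ⊗[k] T := Algebra.TensorProduct.cancelBaseChange k A A R T
  let h : R ⊗[k] T →ₐ[A] R' :=
    e.toAlgHom.comp ((Algebra.TensorProduct.map (.id R R) T.val).restrictScalars A)
  refine ⟨A ⊗[k] T, inferInstance, inferInstance, inferInstance,
    c.symm.toAlgHom.comp g, h.comp c.toAlgHom, ?_⟩
  ext b
  simpa [h, e.eq_symm_apply] using congr(e ($hg b))

end PerfectField

section Pushout

variable {k k' R R' : Type*}

theorem linearIndependent_algebraMap_of_faithfullyFlat [Field k] [Field k'] [CommRing R]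
    [IsLocalRing R] [CommRing R'] [Algebra k k'] [Algebra k R] [Algebra k R'] [Algebra k' R']
    [Algebra R R'] [IsScalarTower k R R'] [IsScalarTower k k' R'] [Module.FaithfullyFlat R R']
    (hk : Function.Surjective (algebraMap k (ResidueField R))) {ι : Type*} {b : ι → k'}
    (hb : LinearIndependent k b) : LinearIndependent R fun i ↦ algebraMap k' R' (b i) := by
  let ψ : k' →ₐ[k] ResidueField R ⊗[R] R' :=
    (Algebra.TensorProduct.includeRight.restrictScalars k).comp (IsScalarTower.toAlgHom k k' R')
  refine Module.IsLocalRing.linearIndependent_of_flat _ (hb.map_of_surjective_injective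
    (algebraMap k (ResidueField R)) ψ.toLinearMap.toAddMonoidHom hk ?_ ?_)
  · exact (injective_iff_map_eq_zero _).mp ψ.toRingHom.injective
  · intro c x
    exact (map_smul ψ c x).trans (algebraMap_smul _ c (ψ x)).symm

variable [CommRing k] [CommRing k'] [CommRing R] [CommRing R']
  [Algebra k k'] [Algebra k R] [Algebra k R'] [Algebra k' R'] [Algebra R R']
  [IsScalarTower k R R'] [IsScalarTower k k' R']

theorem span_range_algebraMap_eq_top_of_isNilpotent {I : Ideal R} (hI : IsNilpotent I)
    (hk' : Function.Surjective (algebraMap k' (R' ⧸ I.map (algebraMap R R'))))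
    {ι : Type*} {b : ι → k'} (hb : Submodule.span k (Set.range b) = ⊤) :
    Submodule.span R (Set.range fun i ↦ algebraMap k' R' (b i)) = ⊤ := by
  have algebraMap_mem (c : k') :
      algebraMap k' R' c ∈ Submodule.span R (Set.range fun i ↦ algebraMap k' R' (b i)) := by
    have hc : c ∈ Submodule.span k (Set.range b) := hb ▸ Submodule.mem_top
    have := Submodule.mem_map_of_mem (f := (IsScalarTower.toAlgHom k k' R').toLinearMap) hc
    rw [Submodule.map_span, ← Set.range_comp] at this
    exact Submodule.span_le_restrictScalars k R _ this
  refine eq_top_of_sup_smul_top_eq_top hI (eq_top_iff.mpr fun x _ ↦ ?_)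
  obtain ⟨c, hc⟩ := hk' (Ideal.Quotient.mk _ x)
  have hxc : x - algebraMap k' R' c ∈ I • (⊤ : Submodule R R') := by
    rw [Ideal.smul_top_eq_map]
    exact Ideal.Quotient.eq.mp hc.symm
  exact Submodule.mem_sup.mpr ⟨_, algebraMap_mem c, _, hxc, add_sub_cancel _ _⟩

end Pushout

theorem isPushout_of_isNilpotent_maximalIdeal {k k' R R' : Type*} [Field k] [Field k'] [CommRing R]
    [IsLocalRing R] [CommRing R'] [Algebra k k'] [Algebra k R] [Algebra k R'] [Algebra k' R']
    [Algebra R R'] [IsScalarTower k R R'] [IsScalarTower k k' R'] [Module.FaithfullyFlat R R']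
    (hR : IsNilpotent (maximalIdeal R))
    (hk : Function.Surjective (algebraMap k (ResidueField R)))
    (hk' : Function.Surjective (algebraMap k' (R' ⧸ (maximalIdeal R).map (algebraMap R R')))) :
    Algebra.IsPushout k R k' R' := by
  let b := Module.Free.chooseBasis k k'
  exact ⟨isBaseChange_of_basis b (.mk
    (linearIndependent_algebraMap_of_faithfullyFlat (R' := R') hk b.linearIndependent)
    (span_range_algebraMap_eq_top_of_isNilpotent hR hk' b.span_eq).ge) fun i ↦ by simp⟩

instance isScalarTower_quotient_map {k A A' : Type*} [CommRing k] [CommRing A] [CommRing A']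
    [Algebra k A] [Algebra k A'] [Algebra A A'] [IsScalarTower k A A'] (I : Ideal A) :
    IsScalarTower k (A ⧸ I) (A' ⧸ I.map (algebraMap A A')) :=
  .to₁₃₄ k A _ _

theorem isPushout_quotient {k k' A A' : Type*} [Field k] [Field k'] [CommRing A]
    [IsLocalRing A] [CommRing A'] [Algebra k k'] [Algebra k A] [Algebra k A'] [Algebra k' A']
    [Algebra A A'] [IsScalarTower k A A'] [IsScalarTower k k' A'] [Module.FaithfullyFlat A A']
    (hk : Function.Surjective (algebraMap k (ResidueField A)))
    (hk' : Function.Surjective (algebraMap k' (A' ⧸ (maximalIdeal A).map (algebraMap A A'))))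
    {I : Ideal A} (hI : I ≠ ⊤) {n : ℕ} (hIn : maximalIdeal A ^ n ≤ I) :
    Algebra.IsPushout k (A ⧸ I) k' (A' ⧸ I.map (algebraMap A A')) := by
  have : Nontrivial (A ⧸ I) := Ideal.Quotient.nontrivial_iff.mpr hI
  have hmk : Function.Surjective (Ideal.Quotient.mk I) := Ideal.Quotient.mk_surjective
  have : IsLocalRing (A ⧸ I) := .of_surjective' _ hmk
  have : IsLocalHom (algebraMap A (A ⧸ I)) := .of_surjective _ hmk
  have hmax : (maximalIdeal A).map (Ideal.Quotient.mk I) = maximalIdeal (A ⧸ I) :=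
    map_maximalIdeal_of_surjective _ hmk
  have : Module.FaithfullyFlat (A ⧸ I) (A' ⧸ I.map (algebraMap A A')) :=
    .of_linearEquiv _ _
      (Algebra.TensorProduct.quotIdealMapEquivQuotTensor A' I).toLinearEquiv
  refine isPushout_of_isNilpotent_maximalIdeal ?_ ?_ ?_
  · exact ⟨n, by rwa [← hmax, ← Ideal.map_pow, Ideal.zero_eq_bot, Ideal.map_eq_bot_iff_le_ker,
      Ideal.mk_ker]⟩
  · intro x
    obtain ⟨x, rfl⟩ := residue_surjective x
    obtain ⟨a, rfl⟩ := hmk x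
    obtain ⟨c, hc⟩ := hk (residue A a)
    exact ⟨c, congr(ResidueField.map (algebraMap A (A ⧸ I)) $hc)⟩
  · intro x
    obtain ⟨x, rfl⟩ := Ideal.Quotient.mk_surjective x
    obtain ⟨a, rfl⟩ := Ideal.Quotient.mk_surjective x
    obtain ⟨c, hc⟩ := hk' (Ideal.Quotient.mk _ a)
    have hca := Ideal.mem_map_of_mem (Ideal.Quotient.mk (I.map (algebraMap A A')))
      (Ideal.Quotient.eq.mp hc)
    refine ⟨c, Ideal.Quotient.eq.mpr ?_⟩
    rw [← hmax]
    rw [Ideal.map_map] at hca ⊢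
    exact hca

theorem stmt2_general {A : Type u} {A' k B : Type*} {k' : Type v} [CommRing A] [CommRing A']
    [IsLocalRing A] [Algebra A A'] [Module.FaithfullyFlat A A'] [Field k] [PerfectField k]
    [Field k'] (σ : k →+* A) (σ' : k' →+* A')
    (hσ : Function.Surjective ((Ideal.Quotient.mk (maximalIdeal A)).comp σ))
    (hσ' : Function.Surjective
      ((Ideal.Quotient.mk ((maximalIdeal A).map (algebraMap A A'))).comp σ'))
    (hσσ' : ∀ x, algebraMap A A' (σ x) ∈ σ'.range)
    [CommRing B] [Algebra A B] [Algebra.FiniteType A B] (v : B →ₐ[A] A')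
    {I : Ideal A} (hI : I ≠ ⊤) {n : ℕ} (hIn : maximalIdeal A ^ n ≤ I) :
    ∃ (D : Type (max u v)) (_ : CommRing D) (_ : Algebra A D), Algebra.Smooth A D ∧
      ∃ (g : B →ₐ[A] (A ⧸ I) ⊗[A] D)
        (h : (A ⧸ I) ⊗[A] D →ₐ[A] A' ⧸ I.map (algebraMap A A')),
        ∀ b : B, h (g b) = Ideal.Quotient.mk (I.map (algebraMap A A')) (v b) := by
  have : Nontrivial A' := (FaithfulSMul.algebraMap_injective A A').nontrivial
  obtain ⟨τ, hτ⟩ := exists_comp_eq_of_range_le (F := σ'.toIntAlgHom) σ'.injective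
    (w := ((algebraMap A A').comp σ).toIntAlgHom) (by rintro _ ⟨x, rfl⟩; exact hσσ' x)
  algebraize [σ, σ', τ.toRingHom, (algebraMap A A').comp σ]
  have : IsScalarTower k k' A' := .of_algebraMap_eq fun x ↦ (DFunLike.congr_fun hτ x).symm
  have := isPushout_quotient (k := k) (k' := k') (A := A) (A' := A') hσ hσ' hI hIn
  obtain ⟨D, _, _, hD, g, h, hgh⟩ := exists_smooth_factorization_of_isPushout (k := k) (k' := k')
    (R := A ⧸ I) ((Ideal.Quotient.mkₐ A (I.map (algebraMap A A'))).comp v)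
  exact ⟨D, _, _, hD, g, h, DFunLike.congr_fun hgh⟩

theorem stmt2 (A A' : Type u) [CommRing A] [CommRing A']
    [IsDomain A] [IsDomain A'] [IsNoetherianRing A] [IsNoetherianRing A']
    [IsLocalRing A] [IsLocalRing A']
    (hdimA : ringKrullDim A = 1) (hdimA' : ringKrullDim A' = 1)
    [Algebra A A'] [IsLocalHom (algebraMap A A')] (hflat : Module.Flat A A')
    (hmax : (IsLocalRing.maximalIdeal A).map (algebraMap A A')
      = IsLocalRing.maximalIdeal A')
    [Algebra ℚ A]
    (hsec : ∃ (σ : (A ⧸ IsLocalRing.maximalIdeal A) →+* A)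
        (σ' : (A' ⧸ IsLocalRing.maximalIdeal A') →+* A'),
      (Ideal.Quotient.mk (IsLocalRing.maximalIdeal A)).comp σ = RingHom.id _ ∧
      (Ideal.Quotient.mk (IsLocalRing.maximalIdeal A')).comp σ' = RingHom.id _ ∧
      ∀ x, algebraMap A A' (σ x) ∈ σ'.range)
    (B : Type u) [CommRing B] [Algebra A B] [Algebra.FiniteType A B]
    (v : B →ₐ[A] A')
    (d : A) (hd : d ∈ IsLocalRing.maximalIdeal A) (hd0 : d ≠ 0) :
    ∃ (D : Type u) (_ : CommRing D) (_ : Algebra A D), Algebra.Smooth A D ∧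
      ∃ (g : B →ₐ[A] ((A ⧸ Ideal.span {d ^ 3}) ⊗[A] D))
        (h : ((A ⧸ Ideal.span {d ^ 3}) ⊗[A] D) →ₐ[A]
          (A' ⧸ Ideal.span {(algebraMap A A' d) ^ 3})),
        ∀ b : B, h (g b) = Ideal.Quotient.mk (Ideal.span {(algebraMap A A' d) ^ 3}) (v b) := by
  obtain ⟨σ, σ', hσ, hσ', hσσ'⟩ := hsec
  have : CharZero (ResidueField A) := algebraRat.charZero _
  have : Module.FaithfullyFlat A A' := .of_flat_of_isLocalHom
  obtain ⟨n, hn⟩ := exists_maximalIdeal_pow_le_span_singleton_s2 hdimA.le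
    (mem_nonZeroDivisors_of_ne_zero (pow_ne_zero 3 hd0))
  have hne_top : Ideal.span {d ^ 3} ≠ ⊤ := ne_top_of_le_ne_top (maximalIdeal.isMaximal A).ne_top
    ((Ideal.span_singleton_le_iff_mem _).mpr (Ideal.pow_mem_of_mem _ hd 3 three_pos))
  have hmap : Ideal.span {algebraMap A A' d ^ 3} = (Ideal.span {d ^ 3}).map (algebraMap A A') := by
    rw [Ideal.map_span, Set.image_singleton, map_pow]
  rw [hmap]
  exact stmt2_general (k := ResidueField A) (k' := ResidueField A') σ σ'
    (fun x ↦ ⟨x, RingHom.congr_fun hσ x⟩)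
    (by rw [hmax]; exact fun x ↦ ⟨x, RingHom.congr_fun hσ' x⟩) hσσ' v hne_top hn
end

section
/- Let A be a Noetherian ring, A' an A-algebra which is an integral domain, Y = (Y₁,…,Yₙ) variables, I an ideal of A[Y], and v : B = A[Y]/I → A' an A-algebra homomorphism given by Y ↦ y ∈ A'ⁿ. Let f = (f₁,…,f_r) be polynomials in I with r ≤ n, M an r×r minor of the Jacobian matrix (∂f_i/∂Y_j) (say on a set C of r columns), N ∈ ((f):I), and set P' = MN. Suppose there are z ∈ A' and a nonzero d' ∈ A whose image in A' equals P'(y)·z. Let Z be a new variable, f_{r+1} = −d' + P'·Z ∈ A[Y,Z], I₁ = I·A[Y,Z] + (f_{r+1}), and B₁ = A[Y,Z]/I₁. Then: (i) the A-algebra map v₁ : B₁ → A' given by Y ↦ y, Z ↦ z is well defined and extends v; (ii) the (r+1)×(r+1) minor M₁ of the Jacobian matrix of (f₁,…,f_{r+1}) with respect to (Y,Z) on the columns C together with the Z-column equals M·P'; (iii) N₁ := N·Z² lies in ((f₁,…,f_{r+1}) : I₁); and (iv) d'² − M₁N₁ ∈ I₁. -/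
universe u

open MvPolynomial

/-!
The polynomial `f_{r+1} = P' Z - d'` adjoins to `B` a quotient `Z = d' / P'`. The earlier `f_i` do
not involve `Z`, so the enlarged Jacobian matrix is block triangular, with corner entry
`∂f_{r+1}/∂Z = P'`; hence `M₁ = M P'`. As `N` carries `I` into `(f)`, it also carries
`I A[Y, Z] + (f_{r+1})` into `(f) A[Y, Z] + (f_{r+1})`. Finally `M₁ N₁ = (P' Z)²`, and
`P' Z ≡ d'` modulo `f_{r+1}`.
-/

theorem colon_le_colon_sup_sup {R M : Type*} [Semiring R] [AddCommMonoid M] [Module R M]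
    (N N' L : Submodule R M) :
    N.colon N' ≤ (N ⊔ L).colon (N' ⊔ L : Submodule R M) := by
  intro x hx
  rw [Submodule.mem_colon]
  intro s hs
  obtain ⟨a, ha, b, hb, rfl⟩ := Submodule.mem_sup.1 hs
  rw [smul_add]
  exact Submodule.add_mem_sup (Submodule.mem_colon.1 hx a ha) (L.smul_mem x hb)

theorem map_mem_colon_map {R S F : Type*} [CommSemiring R] [CommSemiring S] [FunLike F R S]
    [RingHomClass F R S] (φ : F) {I J : Ideal R} {x : R} (hx : x ∈ J.colon I) :
    φ x ∈ (J.map φ).colon (I.map φ) := by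
  rw [show I.map φ = Ideal.span (φ '' I) from rfl, Ideal.colon_span, Submodule.mem_colon]
  rintro _ ⟨a, ha, rfl⟩
  rw [smul_eq_mul, ← map_mul]
  exact Ideal.mem_map_of_mem φ (Submodule.mem_colon.1 hx a ha)

theorem det_eq_mul_of_last_column_eq_zero {R : Type*} [CommRing R] {r : ℕ}
    (T : Matrix (Fin (r + 1)) (Fin (r + 1)) R)
    (hT : ∀ i : Fin r, T i.castSucc (Fin.last r) = 0) :
    T.det = (T.submatrix Fin.castSucc Fin.castSucc).det * T (Fin.last r) (Fin.last r) := by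
  rw [Matrix.det_succ_column T (Fin.last r), Fin.sum_univ_castSucc]
  simp [hT, Fin.succAbove_last, mul_comm]

theorem pderiv_rename_of_notMem_range {R σ τ : Type*} [CommSemiring R] {e : σ → τ} {t : τ}
    (ht : t ∉ Set.range e) (p : MvPolynomial σ R) : pderiv t (rename e p) = 0 := by
  classical
  refine pderiv_eq_zero_of_notMem_vars fun hmem => ht ?_
  obtain ⟨i, -, hi⟩ := mem_vars_rename e p hmem
  exact ⟨i, hi⟩

section JacobianMinor

variable {R σ τ : Type*} [CommRing R]

/-- The minor, on the columns `c`, of the Jacobian matrix `(∂fᵢ/∂Yⱼ)` of a finite family `f` of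
polynomials. Repeated columns are allowed, in which case the minor is zero. -/
noncomputable def jacobianMinor {ι : Type*} [Fintype ι] [DecidableEq ι]
    (f : ι → MvPolynomial σ R) (c : ι → σ) : MvPolynomial σ R :=
  (Matrix.of fun i j => pderiv (c j) (f i)).det

theorem jacobianMinor_rename {ι : Type*} [Fintype ι] [DecidableEq ι] {e : σ → τ}
    (he : Function.Injective e) (f : ι → MvPolynomial σ R) (c : ι → σ) :
    jacobianMinor (rename e ∘ f) (e ∘ c) = rename e (jacobianMinor f c) := by
  rw [jacobianMinor, jacobianMinor, AlgHom.map_det]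
  congr 1
  ext1 i j
  exact pderiv_rename he (c j) (f i)

theorem jacobianMinor_snoc {r : ℕ} {f : Fin r → MvPolynomial σ R} {t : σ}
    (hf : ∀ i, pderiv t (f i) = 0) (c : Fin r → σ) (g : MvPolynomial σ R) :
    jacobianMinor (Fin.snoc f g) (Fin.snoc c t : Fin (r + 1) → σ) =
      jacobianMinor f c * pderiv t g := by
  rw [jacobianMinor, det_eq_mul_of_last_column_eq_zero _ fun i => by simp [hf]]
  congr 1
  · rw [jacobianMinor]
    congr 1
    ext1 i j
    simp
  · simp

end JacobianMinor

section AdjoinQuotient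

variable {R σ τ : Type*} [CommRing R] (e : σ → τ) (t : τ) (d : R) (P : MvPolynomial σ R)

/-- The relation `-d + P Z` making the new variable `Z` a quotient `d / P`. The old variables are
embedded in the new ones by `e`, and `Z` is the variable `t`. -/
noncomputable def quotientRelation : MvPolynomial τ R :=
  -C d + rename e P * X t

/-- The ideal of `R[Y, Z]` presenting the algebra obtained from `R[Y] / I` by adjoining a
quotient `d / P`, with the encoding of variables of `quotientRelation`. -/
noncomputable def adjoinQuotientIdeal (I : Ideal (MvPolynomial σ R)) : Ideal (MvPolynomial τ R) :=
  I.map (rename (R := R) e) ⊔ Ideal.span {quotientRelation e t d P}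

variable {e t d P}

theorem pderiv_quotientRelation (ht : t ∉ Set.range e) :
    pderiv t (quotientRelation e t d P) = rename e P := by
  simp [quotientRelation, pderiv_rename_of_notMem_range ht]

theorem aeval_quotientRelation {S : Type*} [CommRing S] [Algebra R S] (y : τ → S) :
    aeval y (quotientRelation e t d P) = -algebraMap R S d + aeval (y ∘ e) P * y t := by
  simp only [quotientRelation, map_add, map_neg, map_mul, algHom_C, aeval_rename, aeval_X]

theorem jacobianMinor_snoc_quotientRelation (he : Function.Injective e) (ht : t ∉ Set.range e)
    {r : ℕ} (f : Fin r → MvPolynomial σ R) (c : Fin r → σ) :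
    jacobianMinor (Fin.snoc (rename e ∘ f) (quotientRelation e t d P))
        (Fin.snoc (e ∘ c) t : Fin (r + 1) → τ) =
      rename e (jacobianMinor f c) * rename e P := by
  have hf (i : Fin r) : pderiv t ((rename e ∘ f) i) = 0 :=
    pderiv_rename_of_notMem_range ht (f i)
  rw [jacobianMinor_snoc hf, jacobianMinor_rename he, pderiv_quotientRelation ht]

theorem aeval_eq_zero_of_mem_adjoinQuotientIdeal {S : Type*} [CommRing S] [Algebra R S]
    {I : Ideal (MvPolynomial σ R)} {y : τ → S} (hy : ∀ g ∈ I, aeval (y ∘ e) g = 0)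
    (hd : algebraMap R S d = aeval (y ∘ e) P * y t) {g : MvPolynomial τ R}
    (hg : g ∈ adjoinQuotientIdeal e t d P I) : aeval y g = 0 := by
  suffices h : adjoinQuotientIdeal e t d P I ≤ RingHom.ker (aeval (R := R) y) from h hg
  refine sup_le (Ideal.map_le_iff_le_comap.2 fun p hp => ?_) ?_
  · rw [Ideal.mem_comap, RingHom.mem_ker, aeval_rename, hy p hp]
  · rw [Ideal.span_singleton_le_iff_mem, RingHom.mem_ker, aeval_quotientRelation, hd,
      neg_add_cancel]

theorem rename_mem_colon_adjoinQuotientIdeal {I J : Ideal (MvPolynomial σ R)}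
    {p : MvPolynomial σ R} (hp : p ∈ J.colon I) :
    rename e p ∈ (adjoinQuotientIdeal e t d P J).colon (adjoinQuotientIdeal e t d P I) :=
  colon_le_colon_sup_sup _ _ _ (map_mem_colon_map _ hp)

theorem adjoinQuotientIdeal_span_range {r : ℕ} (f : Fin r → MvPolynomial σ R) :
    adjoinQuotientIdeal e t d P (Ideal.span (Set.range f)) =
      Ideal.span (Set.range
        (Fin.snoc (rename e ∘ f) (quotientRelation e t d P) :
          Fin (r + 1) → MvPolynomial τ R)) := by
  rw [adjoinQuotientIdeal, Ideal.map_span, ← Set.range_comp, Fin.range_snoc, Ideal.span_insert,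
    sup_comm]

theorem C_sq_sub_sq_mem_adjoinQuotientIdeal (I : Ideal (MvPolynomial σ R)) :
    C (d ^ 2) - (rename e P * X t) ^ 2 ∈ adjoinQuotientIdeal e t d P I := by
  have hfactor : C (d ^ 2) - (rename e P * X t) ^ 2 =
      -(C d + rename e P * X t) * quotientRelation e t d P := by
    rw [quotientRelation, map_pow]
    ring
  rw [hfactor]
  exact Ideal.mul_mem_left _ _ (Ideal.mem_sup_right (Ideal.mem_span_singleton_self _))

end AdjoinQuotient

theorem stmt6_general {A A' σ τ : Type*} [CommRing A] [CommRing A'] [Algebra A A']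
    {e : σ → τ} (he : Function.Injective e) {t : τ} (ht : t ∉ Set.range e)
    {r : ℕ} (f : Fin r → MvPolynomial σ A) (c : Fin r → σ)
    {I : Ideal (MvPolynomial σ A)} {M N P : MvPolynomial σ A} (hM : M = jacobianMinor f c)
    (hN : N ∈ (Ideal.span (Set.range f)).colon I) (hP : P = M * N)
    {y : σ → A'} (hy : ∀ g ∈ I, aeval y g = 0) {z : A'} {d : A}
    (hd : algebraMap A A' d = aeval y P * z)
    {y₁ : τ → A'} (hy₁ : ∀ i, y₁ (e i) = y i) (hz : y₁ t = z)
    {f₁ : Fin (r + 1) → MvPolynomial τ A}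
    (hf₁ : f₁ = Fin.snoc (rename e ∘ f) (quotientRelation e t d P)) :
    (∀ g ∈ adjoinQuotientIdeal e t d P I, aeval y₁ g = 0) ∧
    (∀ p : MvPolynomial σ A, aeval y₁ (rename e p) = aeval y p) ∧
    jacobianMinor f₁ (Fin.snoc (e ∘ c) t : Fin (r + 1) → τ) = rename e M * rename e P ∧
    rename e N * X t ^ 2 ∈
      (Ideal.span (Set.range f₁)).colon (adjoinQuotientIdeal e t d P I) ∧
    C (d ^ 2) - jacobianMinor f₁ (Fin.snoc (e ∘ c) t : Fin (r + 1) → τ) *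
      (rename e N * X t ^ 2) ∈ adjoinQuotientIdeal e t d P I := by
  obtain rfl : y₁ ∘ e = y := funext hy₁
  subst hz hf₁
  have hminor := jacobianMinor_snoc_quotientRelation (d := d) (P := P) he ht f c
  rw [← hM] at hminor
  have hsq : rename e M * rename e P * (rename e N * X t ^ 2) = (rename e P * X t) ^ 2 := by
    rw [hP, map_mul]
    ring
  refine ⟨fun g hg => aeval_eq_zero_of_mem_adjoinQuotientIdeal hy hd hg,
    fun p => aeval_rename e y₁ p, hminor, ?_, ?_⟩
  · rw [← adjoinQuotientIdeal_span_range]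
    exact Ideal.mul_mem_right _ _ (rename_mem_colon_adjoinQuotientIdeal hN)
  · rw [hminor, hsq]
    exact C_sq_sub_sq_mem_adjoinQuotientIdeal I

theorem stmt6 (A A' : Type u) [CommRing A] [IsNoetherianRing A]
    [CommRing A'] [IsDomain A'] [Algebra A A']
    (n r : ℕ) (hrn : r ≤ n)
    (I : Ideal (MvPolynomial (Fin n) A))
    (f : Fin r → MvPolynomial (Fin n) A) (hf : ∀ i, f i ∈ I)
    (col : Fin r ↪ Fin n)
    (M : MvPolynomial (Fin n) A)
    (hM : M = (Matrix.of fun i j : Fin r => pderiv (col j) (f i)).det)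
    (N : MvPolynomial (Fin n) A) (hN : N ∈ (Ideal.span (Set.range f)).colon I)
    (P' : MvPolynomial (Fin n) A) (hP' : P' = M * N)
    (y : Fin n → A') (hy : ∀ g ∈ I, aeval y g = 0)
    (z : A') (d' : A) (hd'0 : d' ≠ 0)
    (hd' : algebraMap A A' d' = aeval y P' * z)
    (fr1 : MvPolynomial (Fin (n + 1)) A)
    (hfr1 : fr1 = - C d' + rename Fin.castSucc P' * X (Fin.last n))
    (I₁ : Ideal (MvPolynomial (Fin (n + 1)) A))
    (hI₁ : I₁ = Ideal.map
        (rename Fin.castSucc : MvPolynomial (Fin n) A →ₐ[A] MvPolynomial (Fin (n + 1)) A) I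
      ⊔ Ideal.span {fr1})
    (f₁ : Fin (r + 1) → MvPolynomial (Fin (n + 1)) A)
    (hf₁ : f₁ = Fin.snoc (fun i => rename Fin.castSucc (f i)) fr1)
    (col₁ : Fin (r + 1) → Fin (n + 1))
    (hcol₁ : col₁ = Fin.snoc (fun j => Fin.castSucc (col j)) (Fin.last n))
    (M₁ : MvPolynomial (Fin (n + 1)) A)
    (hM₁ : M₁ = (Matrix.of fun i j : Fin (r + 1) => pderiv (col₁ j) (f₁ i)).det)
    (N₁ : MvPolynomial (Fin (n + 1)) A)
    (hN₁ : N₁ = rename Fin.castSucc N * X (Fin.last n) ^ 2)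
    (y₁ : Fin (n + 1) → A') (hy₁ : y₁ = Fin.snoc y z) :
    -- (i) `v₁ : B₁ → A'`, `Y ↦ y`, `Z ↦ z` is well defined and extends `v`
    (∀ g ∈ I₁, aeval y₁ g = 0) ∧
    (∀ p : MvPolynomial (Fin n) A, aeval y₁ (rename Fin.castSucc p) = aeval y p) ∧
    -- (ii) the `(r+1) × (r+1)` minor on the columns `col` together with the `Z`-column
    M₁ = rename Fin.castSucc M * rename Fin.castSucc P' ∧
    -- (iii)
    N₁ ∈ (Ideal.span (Set.range f₁)).colon I₁ ∧
    -- (iv)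
    C (d' ^ 2) - M₁ * N₁ ∈ I₁ := by
  subst hfr1 hI₁ hcol₁ hM₁ hN₁ hy₁
  exact stmt6_general (Fin.castSucc_injective n) (by simp) f col hM hN hP'
    hy hd' (fun i => Fin.snoc_castSucc ..) (Fin.snoc_last ..) hf₁
end

section
/- Let u : A → A' be a flat local homomorphism of Noetherian local domains of Krull dimension one, with maximal ideals m ⊆ A and m' ⊆ A', such that mA' = m'. Assume ℚ ⊆ A. Then u is a regular morphism: u is flat, and for every prime ideal P of A and every finite field extension K of the fraction field of A/P, every localization of K ⊗_{A/P} (A'/PA') at a prime ideal is a regular local ring. -/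
universe u

def IsRegularLocalRingP (R : Type u) [CommRing R] : Prop :=
  IsNoetherianRing R ∧ ∃ _h : IsLocalRing R, ∃ s : Finset R,
    Ideal.span (s : Set R) = IsLocalRing.maximalIdeal R ∧
      (s.card : WithBot (WithTop ℕ)) = ringKrullDim R

open TensorProduct in
def HasGeometricallyRegularFibers (A A' : Type u) [CommRing A] [CommRing A']
    [Algebra A A'] : Prop :=
  ∀ (P : Ideal A), P.IsPrime →
    ∀ (K : Type u) [Field K] [Algebra (A ⧸ P) K]
      [Algebra (FractionRing (A ⧸ P)) K]
      [IsScalarTower (A ⧸ P) (FractionRing (A ⧸ P)) K]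
      [Module.Finite (FractionRing (A ⧸ P)) K],
      ∀ (Q : Ideal (K ⊗[A ⧸ P] (A' ⧸ (P.map (algebraMap A A'))))) [Q.IsPrime],
        IsRegularLocalRingP (Localization.AtPrime Q)

/-!
Let `B = A' / PA'` and let `Q` be a prime of `K ⊗ B` lying over `q ⊆ A'`. The fraction field of
`A / P` has characteristic zero, so `K` is separable over it and `K ⊗ B` is formally unramified and
essentially of finite type over `A'`; hence `q` generates the maximal ideal of the local ring at
`Q`. If `q` is minimal, then `A'_q` is a field because `A'` is reduced, so `q` vanishes in it. If
`q` is maximal, then it is extended from an ideal of `A` contained in `q ∩ A = P`, so `q = PA'`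
vanishes in `B`. No other case occurs in dimension one, so the local ring at `Q` is a field.
-/

open TensorProduct IsLocalRing

theorem isRegularLocalRingP_of_isField {R : Type u} [CommRing R] (hR : IsField R) :
    IsRegularLocalRingP R := by
  let _ : Field R := hR.toField
  refine ⟨inferInstance, inferInstance, ∅, ?_, ?_⟩
  · simpa using (isField_iff_maximalIdeal_eq.mp hR).symm
  · exact (ringKrullDim_eq_zero_of_isField hR).symm

theorem isField_localization_atPrime_of_mem_minimalPrimes {R : Type*} [CommRing R] [IsReduced R]
    {p : Ideal R} [p.IsPrime] (hp : p ∈ minimalPrimes R) : IsField (Localization.AtPrime p) :=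
  have := Ring.KrullDimLE.of_isLocalization p hp (Localization.AtPrime p)
  Ring.KrullDimLE.isField_of_isReduced

theorem isField_localization_atPrime_of_formallyUnramified {R S : Type*} [CommRing R] [CommRing S]
    [Algebra R S] [Algebra.FormallyUnramified R S] [Algebra.EssFiniteType R S]
    (Q : Ideal S) [Q.IsPrime] (h : IsField (Localization.AtPrime (Q.under R))) :
    IsField (Localization.AtPrime Q) := by
  let := Localization.AtPrime.algebraOfLiesOver (Q.under R) Q
  have : Algebra.EssFiniteType (Localization.AtPrime (Q.under R)) (Localization.AtPrime Q) :=
    .of_comp R _ _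
  rw [isField_iff_maximalIdeal_eq] at h ⊢
  rw [← Algebra.FormallyUnramified.map_maximalIdeal (R := Localization.AtPrime (Q.under R)), h,
    Ideal.map_bot]

theorem under_comap_includeRight_eq_bot {k K B : Type*} [CommRing k] [Field K] [CommRing B]
    [Algebra k K] [FaithfulSMul k K] [Algebra k B] (Q : Ideal (K ⊗[k] B)) [Q.IsPrime] :
    (Q.comap (Algebra.TensorProduct.includeRight : B →ₐ[k] K ⊗[k] B)).under k = ⊥ := by
  let i : B →ₐ[k] K ⊗[k] B := Algebra.TensorProduct.includeRight
  calc
    (Q.comap i).under k = Q.under k := by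
      rw [Ideal.under_def, Ideal.under_def, ← i.comp_algebraMap]
      exact Ideal.comap_comap _ _
    _ = (Q.under K).under k := (Ideal.under_under Q).symm
    _ = ⊥ := by rw [Ideal.eq_bot_of_prime (Q.under K), Ideal.under_bot]

theorem isField_localization_atPrime_of_comap_includeRight {k K B : Type*} [CommRing k] [CommRing K]
    [CommRing B] [Algebra k K] [Algebra k B] [Algebra.FormallyUnramified k K]
    [Algebra.EssFiniteType k K] (Q : Ideal (K ⊗[k] B)) [Q.IsPrime]
    (h : IsField (Localization.AtPrime
      (Q.comap (Algebra.TensorProduct.includeRight : B →ₐ[k] K ⊗[k] B)))) :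
    IsField (Localization.AtPrime Q) := by
  let := Algebra.TensorProduct.rightAlgebra (R := k) (A := K) (B := B)
  let e : B ⊗[k] K ≃ₐ[B] K ⊗[k] B := Algebra.TensorProduct.commRight k B K
  have : Algebra.FormallyUnramified B (K ⊗[k] B) := .of_equiv e
  have : Algebra.EssFiniteType B (K ⊗[k] B) := .of_surjective e.toAlgHom e.surjective
  exact isField_localization_atPrime_of_formallyUnramified (R := B) Q h

theorem isField_localization_atPrime_of_under_le {A A' : Type*} [CommRing A] [CommRing A']
    [Algebra A A'] [IsReduced A'] [Ring.KrullDimLE 1 A']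
    (hmax : ∀ 𝔪 : Ideal A', 𝔪.IsMaximal → ∃ I : Ideal A, I.map (algebraMap A A') = 𝔪)
    {P : Ideal A} (q : Ideal (A' ⧸ P.map (algebraMap A A'))) [q.IsPrime] (hq : q.under A ≤ P) :
    IsField (Localization.AtPrime q) := by
  obtain hqmin | hqmax := Ring.krullDimLE_one_iff.mp ‹_› (q.under A') inferInstance
  · exact isField_localization_atPrime_of_formallyUnramified q
      (isField_localization_atPrime_of_mem_minimalPrimes hqmin)
  · obtain ⟨I, hI⟩ := hmax _ hqmax
    have hIP : I ≤ P := by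
      refine le_trans ?_ hq
      rw [← Ideal.under_under (B := A'), ← hI]
      exact Ideal.le_comap_map
    have hP : P.map (algebraMap A A') = q.under A' :=
      le_antisymm ((Ideal.mk_ker (I := P.map (algebraMap A A'))).ge.trans (Ideal.ker_le_comap _))
        (hI ▸ Ideal.map_mono hIP)
    have : (P.map (algebraMap A A')).IsMaximal := hP ▸ hqmax
    let := Ideal.Quotient.field (P.map (algebraMap A A'))
    exact Ring.KrullDimLE.isField_of_isReduced

theorem stmt7_general (A A' : Type u) [CommRing A] [CommRing A'] [Algebra A A'] [IsReduced A']
    [Ring.KrullDimLE 1 A']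
    (hmax : ∀ 𝔪 : Ideal A', 𝔪.IsMaximal → ∃ I : Ideal A, I.map (algebraMap A A') = 𝔪)
    (hperf : ∀ (P : Ideal A) [P.IsPrime], PerfectField (FractionRing (A ⧸ P))) :
    HasGeometricallyRegularFibers A A' := by
  intro P hP K _ _ _ _ _ Q _
  let k := A ⧸ P
  let F := FractionRing k
  have := hperf P
  have : Algebra.FormallyUnramified k F := .of_isLocalization (nonZeroDivisors k)
  have : Algebra.FormallyUnramified F K := .of_isSeparable F K
  have : Algebra.FormallyUnramified k K := .comp k F K
  have : Algebra.EssFiniteType k F := .of_isLocalization F (nonZeroDivisors k)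
  have : Algebra.EssFiniteType k K := .comp k F K
  have : FaithfulSMul k K := .trans k F K
  refine isRegularLocalRingP_of_isField (isField_localization_atPrime_of_comap_includeRight Q
    (isField_localization_atPrime_of_under_le hmax _ ?_))
  rw [← Ideal.under_under (B := k), under_comap_includeRight_eq_bot]
  exact Ideal.mk_ker.le

theorem stmt7 (A A' : Type u) [CommRing A] [CommRing A']
    [IsDomain A] [IsDomain A'] [IsNoetherianRing A] [IsNoetherianRing A']
    [IsLocalRing A] [IsLocalRing A']
    (hdimA : ringKrullDim A = 1) (hdimA' : ringKrullDim A' = 1)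
    [Algebra A A'] [IsLocalHom (algebraMap A A')] (hflat : Module.Flat A A')
    (hmax : (IsLocalRing.maximalIdeal A).map (algebraMap A A')
      = IsLocalRing.maximalIdeal A')
    [Algebra ℚ A] :
    Module.Flat A A' ∧ HasGeometricallyRegularFibers A A' := by
  have : Ring.KrullDimLE 1 A' := Ring.krullDimLE_iff.mpr hdimA'.le
  exact ⟨hflat, stmt7_general A A'
    (fun 𝔪 h𝔪 ↦ ⟨maximalIdeal A, hmax.trans (eq_maximalIdeal h𝔪).symm⟩)
    fun P _ ↦ have := algebraRat.charZero (FractionRing (A ⧸ P)); inferInstance⟩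
end

section
/- Let u : A → A' be an injective local homomorphism of Noetherian local domains of Krull dimension one. Then Frac(A) ⊗_A A' is a field, isomorphic to the fraction field of A'. -/
universe u

open TensorProduct

/-!
A nonzero nonunit `m` of `A` is sent by the local homomorphism into the maximal ideal of `A'`. As
that is the only nonzero prime of `A'`, it is the radical of every nonzero principal ideal `(s)`
with `s` a nonunit, so every nonzero `s` divides a power of the image of `m`. Inverting the
nonzero elements of `A` therefore already inverts every nonzero element of `A'`.
-/

theorem isFractionRing_of_isLocalization_of_mem_maximalIdeal {R S : Type*} [CommRing R]
    [IsDomain R] [IsLocalRing R] [CommRing S] [Algebra R S] (hdim : ringKrullDim R = 1)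
    (M : Submonoid R) [IsLocalization M S] (hM : M ≤ nonZeroDivisors R) {m : R} (hmM : m ∈ M)
    (hm : m ∈ IsLocalRing.maximalIdeal R) : IsFractionRing R S := by
  refine IsLocalization.of_le_of_exists_dvd M _ hM fun s hs ↦ ?_
  obtain ⟨n, hn⟩ : m ∈ (Ideal.span {s}).radical :=
    (ringKrullDim_eq_one_iff_of_isLocalRing_isDomain.mp hdim).2 s (nonZeroDivisors.ne_zero hs) hm
  exact ⟨m ^ n, pow_mem hmM n, Ideal.mem_span_singleton.mp hn⟩

section GenericFiber

attribute [local instance] Algebra.TensorProduct.rightAlgebra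

theorem isFractionRing_tensorProduct_of_isLocalHom (A A' K : Type*) [CommRing A] [CommRing A']
    [IsDomain A'] [IsLocalRing A'] [CommRing K] [Algebra A K] [IsFractionRing A K]
    [Algebra A A'] [IsLocalHom (algebraMap A A')] (hA : ¬ IsField A)
    (hdimA' : ringKrullDim A' = 1) (hinj : Function.Injective (algebraMap A A')) :
    IsFractionRing A' (K ⊗[A] A') := by
  have : IsDomain A := hinj.isDomain (algebraMap A A')
  obtain ⟨m, hm0, hm⟩ := Ring.exists_not_isUnit_of_not_isField hA
  have hm' : algebraMap A A' m ∈ IsLocalRing.maximalIdeal A' :=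
    fun h ↦ hm (isUnit_of_map_unit _ m h)
  exact isFractionRing_of_isLocalization_of_mem_maximalIdeal hdimA'
    (Algebra.algebraMapSubmonoid A' (nonZeroDivisors A))
    (map_le_nonZeroDivisors_of_injective _ hinj le_rfl)
    (Algebra.mem_algebraMapSubmonoid_of_mem ⟨m, mem_nonZeroDivisors_of_ne_zero hm0⟩) hm'

theorem stmt8_general (A A' : Type*) [CommRing A] [CommRing A'] [IsDomain A'] [IsLocalRing A']
    (hA : ¬ IsField A) (hdimA' : ringKrullDim A' = 1) [Algebra A A']
    (hinj : Function.Injective (algebraMap A A')) [IsLocalHom (algebraMap A A')] :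
    IsField (FractionRing A ⊗[A] A') ∧
      Nonempty ((FractionRing A ⊗[A] A') ≃+* FractionRing A') := by
  have := isFractionRing_tensorProduct_of_isLocalHom A A' (FractionRing A) hA hdimA' hinj
  exact ⟨(IsFractionRing.toField A').toIsField,
    ⟨(FractionRing.algEquiv A' (FractionRing A ⊗[A] A')).symm.toRingEquiv⟩⟩

end GenericFiber

theorem stmt8 (A A' : Type u) [CommRing A] [CommRing A'] [IsDomain A] [IsDomain A']
    [IsNoetherianRing A] [IsNoetherianRing A'] [IsLocalRing A] [IsLocalRing A']
    (hdimA : ringKrullDim A = 1) (hdimA' : ringKrullDim A' = 1)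
    [Algebra A A'] (hinj : Function.Injective (algebraMap A A'))
    [IsLocalHom (algebraMap A A')] :
    IsField ((FractionRing A) ⊗[A] A') ∧
      Nonempty (((FractionRing A) ⊗[A] A') ≃+* FractionRing A') :=
  stmt8_general A A' (ringKrullDim_eq_one_iff_of_isLocalRing_isDomain.mp hdimA).1 hdimA' hinj
end
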